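/- arXiv:1104.5007 — 2 statements merged into one kernel-verified Lean document; each statement's English description precedes it below -/
import Mathlib

section
/- For every fixed integer k ≥ 4, with t := ⌊(k−2)/2⌋, there exists a constant C_k such that for every integer n ≥ 1 there is an n×n (0,1)-matrix that is not (k+1)-full and has at least n·2^{(1/t!)·α(n)^t − C_k·α(n)^{t−1}} 1-entries; in other words, p_k(n) ≥ n·2^{(1/t!)·α(n)^t − C_k·α(n)^{t−1}}. -/
/-! ## Inverse Ackermann hierarchy -/

/-- Bounded-fuel iteration counter: number of applications of `f` needed to bring `m`
down to a value `≤ 1` (assuming `f` strictly decreases on values `≥ 2`). -/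
def iterCount (f : ℕ → ℕ) : ℕ → ℕ → ℕ
  | 0, _ => 0
  | fuel + 1, m => if m ≤ 1 then 0 else 1 + iterCount f fuel (f m)

/-- The inverse Ackermann hierarchy: `alphaHier 1 m = ⌈m/2⌉`, `alphaHier d 1 = 0` for `d ≥ 2`,
and `alphaHier d m = 1 + alphaHier d (alphaHier (d-1) m)` for `m, d ≥ 2`. -/
def alphaHier : ℕ → ℕ → ℕ
  | 0, m => m
  | 1, m => (m + 1) / 2
  | d + 2, m => iterCount (alphaHier (d + 1)) m m

/-- The inverse Ackermann function `α(m) = min {k ≥ 1 : α_k(m) ≤ 3}`. -/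
noncomputable def invAck (m : ℕ) : ℕ := sInf {k : ℕ | 1 ≤ k ∧ alphaHier k m ≤ 3}

/-! ## Permutations, restrictions, VC-dimension -/

/-- The restriction of the `n`-permutation `π` to the (increasing) `k`-tuple of positions `a`
is the `k`-permutation `σ`. -/
def PermRestrictionIs {n k : ℕ} (π : Equiv.Perm (Fin n)) (a : Fin k → Fin n)
    (σ : Equiv.Perm (Fin k)) : Prop :=
  ∀ i j : Fin k, σ i < σ j ↔ π (a i) < π (a j)

/-- The `k`-tuple of positions `a` is shattered by the family `P` of `n`-permutations. -/
def Shatters {n k : ℕ} (P : Finset (Equiv.Perm (Fin n))) (a : Fin k → Fin n) : Prop :=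
  StrictMono a ∧ ∀ σ : Equiv.Perm (Fin k), ∃ π ∈ P, PermRestrictionIs π a σ

/-- The family `P` of `n`-permutations has VC-dimension at most `k`:
no `(k+1)`-tuple of positions is shattered by `P`. -/
def VCDimLE (n k : ℕ) (P : Finset (Equiv.Perm (Fin n))) : Prop :=
  ∀ a : Fin (k + 1) → Fin n, ¬ Shatters P a

/-- The number of `1`-entries of the union of the permutation matrices of a family `P`
of `n`-permutations. -/
noncomputable def permOnes {n : ℕ} (P : Finset (Equiv.Perm (Fin n))) : ℕ :=
  Nat.card {p : Fin n × Fin n // ∃ π ∈ P, π p.2 = p.1}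

/-- `v(P) = |M_P| / n`, the average number of `1`-entries per column of the union
of the permutation matrices of the family `P`. -/
noncomputable def vPerm {n : ℕ} (P : Finset (Equiv.Perm (Fin n))) : ℝ :=
  (permOnes P : ℝ) / (n : ℝ)

/-! ## (0,1)-matrices -/

/-- The number of `1`-entries of a `(0,1)`-matrix (represented as a `Bool` matrix). -/
noncomputable def matOnes {m n : ℕ} (M : Fin m → Fin n → Bool) : ℕ :=
  Nat.card {p : Fin m × Fin n // M p.1 p.2 = true}

/-- The number of `1`-entries in column `j` of a `(0,1)`-matrix. -/
noncomputable def colOnes {m n : ℕ} (M : Fin m → Fin n → Bool) (j : Fin n) : ℕ :=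
  Nat.card {i : Fin m // M i j = true}

/-- The matrix `B` contains the matrix `S`. -/
def MatContains {m n p q : ℕ} (B : Fin m → Fin n → Bool) (S : Fin p → Fin q → Bool) : Prop :=
  ∃ (r : Fin p → Fin m) (c : Fin q → Fin n), StrictMono r ∧ StrictMono c ∧
    ∀ a b, S a b = true → B (r a) (c b) = true

/-- The `s × 2` matrix `DS_s`, with a `1`-entry in (1-indexed) row `i` and column `j`
exactly when `i + j` is odd. -/
def DS (s : ℕ) : Fin s → Fin 2 → Bool :=
  fun i j => decide ((i.val + j.val) % 2 = 1)

/-- The maximum number of `1`-entries in an `n × n` matrix avoiding `S`. -/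
noncomputable def exMat {p q : ℕ} (S : Fin p → Fin q → Bool) (n : ℕ) : ℕ :=
  sSup {x : ℕ | ∃ M : Fin n → Fin n → Bool, ¬ MatContains M S ∧ matOnes M = x}

/-- An `n × n` matrix is `k`-full if some increasing `k`-tuple of columns contains
every `k`-permutation matrix. -/
def IsFull (k : ℕ) {n : ℕ} (M : Fin n → Fin n → Bool) : Prop :=
  ∃ c : Fin k → Fin n, StrictMono c ∧ ∀ σ : Equiv.Perm (Fin k),
    ∃ r : Fin k → Fin n, StrictMono r ∧ ∀ b : Fin k, M (r (σ b)) (c b) = true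

/-- `pFull k n` is the maximum number of `1`-entries in an `n × n` matrix that is
not `(k+1)`-full. -/
noncomputable def pFull (k n : ℕ) : ℕ :=
  sSup {x : ℕ | ∃ M : Fin n → Fin n → Bool, ¬ IsFull (k + 1) M ∧ matOnes M = x}

/-! ## Formations -/

/-- `M` contains a `B`-fat `(r,s)`-formation: there are an `s`-partition of the rows into
intervals (the fibers of a monotone map `g`) and `r` columns, each having at least `B`
`1`-entries in every interval. -/
def FatFormation (B r s : ℕ) {m n : ℕ} (M : Fin m → Fin n → Bool) : Prop :=
  ∃ g : Fin m → Fin s, Monotone g ∧ ∃ c : Fin r → Fin n, StrictMono c ∧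
    ∀ (j : Fin r) (i : Fin s), B ≤ Nat.card {x : Fin m // g x = i ∧ M x (c j) = true}

/-- `M` contains a doubled `(r,s)`-formation: there are an `s`-partition of the rows into
intervals and `r` columns, each having at least one `1`-entry in the first and last
interval and at least two `1`-entries in every other interval. -/
def DoubledFormation (r s : ℕ) {m n : ℕ} (M : Fin m → Fin n → Bool) : Prop :=
  ∃ g : Fin m → Fin s, Monotone g ∧ ∃ c : Fin r → Fin n, StrictMono c ∧
    ∀ (j : Fin r) (i : Fin s),
      1 ≤ Nat.card {x : Fin m // g x = i ∧ M x (c j) = true} ∧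
      (i.val ≠ 0 → i.val ≠ s - 1 → 2 ≤ Nat.card {x : Fin m // g x = i ∧ M x (c j) = true})

/-! ## The functions R, D, β -/

/-- Nivasch's hierarchy `R_s(d)` (shifted as in the paper). -/
def Rfun : ℕ → ℕ → ℕ
  | 0, _ => 0
  | 1, _ => 0
  | 2, _ => 2
  | 3, _ => 3
  | 4, d => 2 * d + 1
  | _ + 5, 0 => 0
  | _ + 5, 1 => 0
  | s + 5, 2 => 2 ^ (s + 3) + 1
  | s + 5, d + 3 =>
      2 * (Rfun (s + 4) (d + 3) - 1) + (Rfun (s + 3) (d + 3) - 1) * (Rfun (s + 5) (d + 2) - 3) + 1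
  termination_by s d => (s, d)

/-- The hierarchy `D_s(d)`. -/
def Dfun : ℕ → ℕ → ℕ
  | 0, _ => 0
  | 1, _ => 0
  | 2, _ => 2
  | _ + 3, 0 => 0
  | _ + 3, 1 => 0
  | s + 3, 2 => 2 ^ (s + 2) + 2 ^ (s + 1) - 1
  | s + 3, d + 3 =>
      2 * Dfun (s + 2) (d + 3) + (Dfun (s + 1) (d + 3) + 1) * (Rfun (s + 3) (d + 2) - 3)
        + Dfun (s + 3) (d + 2) - Rfun (s + 3) (d + 2) + 1
  termination_by s d => (s, d)

/-- `β_s(m) = D_s(α(m))`. -/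
noncomputable def betaFun (s m : ℕ) : ℕ := Dfun s (invAck m)

/-! ## Sequences: MST and formations in sequences -/

/-- The list of column indices of the `1`-entries of a row, in increasing order. -/
def rowList {n : ℕ} (row : Fin n → Bool) : List (Fin n) :=
  (List.finRange n).filter (fun j => row j)

/-- The matrix → sequence transformation: read the rows top to bottom, writing for each
`1`-entry the index of its column. -/
def MST {m n : ℕ} (M : Fin m → Fin n → Bool) : List (Fin n) :=
  ((List.finRange m).map (fun i => rowList (M i))).flatten

/-- The list `L` contains an `(r,s)`-formation as a subsequence: a concatenation of `s`
permutations of the same `r`-element set of symbols is a sublist of `L`. -/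
def IsFormationSeq {A : Type*} [DecidableEq A] (r s : ℕ) (L : List A) : Prop :=
  ∃ (T : Finset A) (F : List (List A)), T.card = r ∧ F.length = s ∧
    (∀ l ∈ F, l.Nodup ∧ l.toFinset = T) ∧ List.Sublist F.flatten L

set_option linter.unusedSectionVars false

/-! ### Alternation counters -/

/-- Greedy length of the longest alternation `a b a b …` (starting with `a`) in `w`. -/
def altC {A : Type} [DecidableEq A] : A → A → List A → ℕ
  | _, _, [] => 0
  | a, b, c :: w => if c = a then altC b a w + 1 else altC a b w

section altlemmas
variable {A B : Type} [DecidableEq A] [DecidableEq B]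

theorem altC_swap (w : List A) : ∀ a b : A, altC a b w ≤ altC b a w + 1 := by
  induction w with
  | nil => intro a b; simp [altC]
  | cons c w ih =>
    intro a b
    have h1 := ih a b
    have h2 := ih b a
    by_cases hab : a = b
    · subst hab; omega
    · simp only [altC]
      split_ifs <;> omega

theorem altC_append (u v : List A) : ∀ a b : A,
    altC a b (u ++ v) = altC a b u + (if altC a b u % 2 = 0 then altC a b v else altC b a v) := by
  induction u with
  | nil => intro a b; simp [altC]
  | cons c u ih =>
    intro a b
    simp only [List.cons_append, altC]
    by_cases h : c = a
    · simp only [h, if_true]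
      rw [ih b a]
      rcases Nat.mod_two_eq_zero_or_one (altC b a u) with h2 | h2
      · have : (altC b a u + 1) % 2 = 1 := by omega
        simp [h2, this]; omega
      · have : (altC b a u + 1) % 2 = 0 := by omega
        simp [h2, this]; omega
    · simp only [h, if_false]
      exact ih a b

theorem altC_sublist {u v : List A} (h : u.Sublist v) :
    ∀ a b : A, altC a b u ≤ altC a b v := by
  induction h with
  | slnil => intro a b; simp
  | cons c h ih =>
    rename_i u v
    intro a b
    have := ih a b
    have h2 := altC_swap v a b
    simp only [altC]
    split_ifs <;> omega
  | cons_cons c h ih =>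
    intro a b
    have := ih a b
    have := ih b a
    simp only [altC]
    split_ifs <;> omega

theorem altC_count (w : List A) : ∀ a b : A, a ≠ b →
    altC a b w ≤ 2 * w.count a ∧ altC a b w ≤ 2 * w.count b + 1 := by
  induction w with
  | nil => intro a b _; simp [altC]
  | cons c w ih =>
    intro a b hab
    have h1 := ih a b hab
    have h2 := ih b a hab.symm
    simp only [altC, List.count_cons]
    by_cases hca : c = a
    · subst hca
      simp [hab]; omega
    · by_cases hcb : c = b
      · subst hcb
        simp [hca]; omega
      · simp [hca, hcb]; omega

theorem altC_not_mem_left {w : List A} {a b : A} (hab : a ≠ b) (h : a ∉ w) : altC a b w = 0 := by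
  have := (altC_count w a b hab).1
  rw [List.count_eq_zero_of_not_mem h] at this; omega

theorem altC_not_mem_right {w : List A} {a b : A} (hab : a ≠ b) (h : b ∉ w) : altC a b w ≤ 1 := by
  have := (altC_count w a b hab).2
  rw [List.count_eq_zero_of_not_mem h] at this; omega

theorem altC_mem {w : List A} {a b : A} (h : a ∈ w) : 1 ≤ altC a b w := by
  have := altC_sublist (List.singleton_sublist.2 h) a b
  simpa [altC] using this

theorem altC_append_mono {u v u' v' : List A} {a b : A} (h : altC a b u ≤ altC a b u')
    (h1 : altC a b v ≤ altC a b v') (h2 : altC b a v ≤ altC b a v') :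
    altC a b (u ++ v) ≤ altC a b (u' ++ v') := by
  rw [altC_append, altC_append]
  have := altC_swap v' a b
  have := altC_swap v' b a
  split_ifs <;> omega

theorem altC_filterMap (g : A → Option B) (w : List A) : ∀ (a b : A) (a' b' : B),
    (∀ x, g x = some a' ↔ x = a) → (∀ x, g x = some b' ↔ x = b) →
    altC a' b' (w.filterMap g) = altC a b w := by
  induction w with
  | nil => intros; simp [altC]
  | cons c w ih =>
    intro a b a' b' ha hb
    rw [List.filterMap_cons]
    have e1 := ih a b a' b' ha hb
    have e2 := ih b a b' a' hb ha
    by_cases hca : c = a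
    · subst hca
      have := (ha c).2 rfl
      simp [this, altC, e2]
    · have hn : g c ≠ some a' := fun h => hca ((ha c).1 h)
      rcases hg : g c with _ | y
      · simp [altC, hca, e1]
      · have : y ≠ a' := by rintro rfl; exact hn hg
        simp [altC, hca, e1, this]

theorem count_filterMap_eq (g : A → Option B) (w : List A) (a : A) (a' : B)
    (ha : ∀ x, g x = some a' ↔ x = a) : (w.filterMap g).count a' = w.count a := by
  induction w with
  | nil => simp
  | cons c w ih =>
    rw [List.filterMap_cons]
    by_cases hca : c = a
    · subst hca
      have := (ha c).2 rfl
      simp [this, ih]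
    · have hn : g c ≠ some a' := fun h => hca ((ha c).1 h)
      rcases hg : g c with _ | y
      · simp [hca, ih]
      · have : y ≠ a' := by rintro rfl; exact hn hg
        simp [hca, ih, this]

theorem altC_map (f : A → B) (hf : Function.Injective f) (w : List A) (a b : A) :
    altC (f a) (f b) (w.map f) = altC a b w := by
  induction w generalizing a b with
  | nil => simp [altC]
  | cons c w ih => simp [altC, hf.eq_iff, ih]

theorem altC_idx (w : List A) (a b : A) (hab : a ≠ b) (h : w.idxOf a ≤ w.idxOf b) :
    altC b a w = 0 ∨ altC a b w = altC b a w + 1 := by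
  induction w with
  | nil => left; simp [altC]
  | cons c w ih =>
    rw [List.idxOf_cons, List.idxOf_cons] at h
    by_cases hca : c = a
    · subst hca
      right; simp [altC, hab]
    · by_cases hcb : c = b
      · subst hcb
        rw [beq_false_of_ne hca] at h
        simp at h
      · rw [beq_false_of_ne hca, beq_false_of_ne hcb] at h
        simp at h
        have := ih h
        simpa [altC, hca, hcb] using this

/-- A word containing all orderings of an `r`-set contains an alternation of length `r+1`. -/
theorem exists_alt_of_all_orders (r : ℕ) : ∀ (X : Finset A) (w : List A), X.card = r + 2 →
    (∀ l : List A, l.Nodup → l.toFinset = X → l.Sublist w) →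
    ∃ a ∈ X, ∃ b ∈ X, a ≠ b ∧ r + 3 ≤ altC a b w := by
  induction r with
  | zero =>
    intro X w hX h
    obtain ⟨a, b, hab, rfl⟩ := Finset.card_eq_two.1 hX
    have h1 := h [a, b] (by simp [hab]) (by simp)
    have h2 := h [b, a] (by simp [hab.symm]) (by simp [Finset.pair_comm])
    have k1 := altC_sublist h1 a b
    have k2 := altC_sublist h2 b a
    simp [altC] at k1 k2
    rcases le_total (w.idxOf a) (w.idxOf b) with hi | hi
    · rcases altC_idx w a b hab hi with h3 | h3
      · omega
      · exact ⟨a, by simp, b, by simp, hab, by omega⟩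
    · rcases altC_idx w b a hab.symm hi with h3 | h3
      · omega
      · exact ⟨b, by simp, a, by simp, hab.symm, by omega⟩
  | succ r ih =>
    intro X w hX h
    have hne : X.Nonempty := by rw [← Finset.card_pos]; omega
    obtain ⟨x, hx, hmax⟩ := Finset.exists_max_image X (fun y => w.idxOf y) hne
    have hsub : ∀ y ∈ X, y ∈ w := by
      intro y hy
      have := h X.toList X.nodup_toList (by simp)
      exact this.subset (by simpa using hy)
    -- split at first occurrence of x
    obtain ⟨u, v, hxu, hw⟩ : ∃ u v, x ∉ u ∧ w = u ++ x :: v := by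
      obtain ⟨u, v, hw, hxu⟩ := List.eq_append_cons_of_mem (hsub x hx)
      exact ⟨u, v, hxu, hw⟩
    have hX' : (X.erase x).card = r + 2 := by rw [Finset.card_erase_of_mem hx]; omega
    obtain ⟨a, ha, b, hb, hab, hle⟩ := ih (X.erase x) v hX' (by
      intro l hl hlX
      have hxl : x ∉ l := by
        intro hxl
        have : x ∈ l.toFinset := by simpa using hxl
        rw [hlX] at this; simp at this
      have := h (x :: l) (by simp [hxl, hl]) (by simp [hlX, Finset.insert_erase hx])
      rw [hw] at this
      clear hw hmax hsub
      induction u with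
      | nil => simpa using this
      | cons c u ihu =>
        simp at hxu
        apply ihu hxu.2
        rw [List.cons_append, List.cons_sublist_cons'] at this
        rcases this with h | h
        · exact h
        · exact absurd h.1 hxu.1)
    have hbu : b ∈ u := by
      simp at hb
      have := hmax b hb.2
      rw [hw] at this
      by_contra hbu
      rw [List.idxOf_append_of_notMem hbu, List.idxOf_append_of_notMem hxu] at this
      simp [List.idxOf_cons_ne _ (Ne.symm hb.1)] at this
    refine ⟨b, Finset.mem_of_mem_erase hb, a, Finset.mem_of_mem_erase ha, hab.symm, ?_⟩
    have hs : (b :: v).Sublist w := by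
      rw [hw]
      have := (List.singleton_sublist.2 hbu).append ((List.sublist_cons_self x v))
      simpa using this
    have := altC_sublist hs b a
    simp [altC] at this
    omega
end altlemmas
/-! ### The Ackermann hierarchy -/

/-- `akF d` is the (upper) inverse of `alphaHier (d+1)`. -/
def akF : ℕ → ℕ → ℕ
  | 0, x => 2 * x
  | d + 1, x => (akF d)^[x] 1

theorem akF_succ_zero (d : ℕ) : akF (d + 1) 0 = 1 := rfl

theorem akF_succ_succ (d x : ℕ) : akF (d + 1) (x + 1) = akF d (akF (d + 1) x) := by
  simp only [akF, Function.iterate_succ_apply']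

theorem akF_one (x : ℕ) : akF 1 x = 2 ^ x := by
  induction x with
  | zero => rfl
  | succ x ih => rw [akF_succ_succ, ih]; simp only [akF]; ring

theorem akF_ge (d : ℕ) : ∀ x, 2 ^ x ≤ akF (d + 1) x := by
  induction d with
  | zero => intro x; rw [akF_one]
  | succ d ih =>
    intro x
    induction x with
    | zero => simp [akF_succ_zero]
    | succ x ihx =>
      rw [akF_succ_succ]
      refine le_trans ?_ (ih _)
      apply Nat.pow_le_pow_right (by norm_num)
      have : x < 2 ^ x := Nat.lt_two_pow_self
      omega

theorem akF_mono (d : ℕ) : Monotone (akF (d + 1)) := by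
  apply monotone_nat_of_le_succ
  intro x
  rcases d with _ | d
  · rw [akF_one, akF_one]; exact Nat.pow_le_pow_right (by norm_num) (by omega)
  · rw [akF_succ_succ (d + 1)]
    refine le_trans ?_ (akF_ge d _)
    exact Nat.lt_two_pow_self.le

theorem akF_at_one (d : ℕ) : akF d 1 = 2 := by
  induction d with
  | zero => rfl
  | succ d ih => rw [akF_succ_succ, akF_succ_zero, ih]

theorem akF_at_two (d : ℕ) : akF d 2 = 4 := by
  induction d with
  | zero => rfl
  | succ d ih => rw [akF_succ_succ, akF_at_one, ih]

theorem akF_at_three (d : ℕ) : akF (d + 1) 3 = akF d 4 := by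
  rw [akF_succ_succ, akF_at_two]

theorem akF_three_rec (d : ℕ) : akF (d + 2) 3 = akF d (akF (d + 1) 3) := by
  rw [akF_at_three, akF_succ_succ]

theorem akF_three_ge (d : ℕ) : 2 ^ 2 ^ (d + 4) ≤ akF (d + 3) 3 := by
  induction d with
  | zero =>
    rw [akF_three_rec, akF_three_rec, akF_one, akF_one]; norm_num [akF]
  | succ d ih =>
    rw [show d + 1 + 3 = (d + 2) + 2 by ring, akF_three_rec]
    refine le_trans ?_ (akF_ge _ _)
    apply Nat.pow_le_pow_right (by norm_num)
    refine le_trans ?_ ih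
    apply Nat.pow_le_pow_right (by norm_num)
    exact Nat.lt_two_pow_self

theorem alphaHier_le (d : ℕ) : ∀ m x, m ≤ akF d x → alphaHier (d + 1) m ≤ x := by
  induction d with
  | zero => intro m x h; simp only [akF, alphaHier] at *; omega
  | succ d ih =>
    have key : ∀ x fuel m, m ≤ akF (d + 1) x → iterCount (alphaHier (d + 1)) fuel m ≤ x := by
      intro x
      induction x with
      | zero =>
        intro fuel m h
        rw [akF_succ_zero] at h
        rcases fuel with _ | fuel <;> simp [iterCount, h]
      | succ x ihx =>
        intro fuel m h
        rw [akF_succ_succ] at h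
        rcases fuel with _ | fuel
        · simp [iterCount]
        · simp only [iterCount]
          have := ihx fuel _ (ih _ _ h)
          split_ifs <;> omega
    intro m x h
    exact key x m m h

theorem lt_two_two_pow (n : ℕ) : n ≤ 2 ^ 2 ^ (n + 4) := by
  have h1 : n + 4 < 2 ^ (n + 4) := Nat.lt_two_pow_self
  have h2 : 2 ^ (n + 4) < 2 ^ 2 ^ (n + 4) := Nat.lt_two_pow_self
  omega

theorem invAck_pos (n : ℕ) : 1 ≤ invAck n := by
  have hne : {k : ℕ | 1 ≤ k ∧ alphaHier k n ≤ 3}.Nonempty :=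
    ⟨n + 3 + 1, by omega, alphaHier_le _ _ _ ((lt_two_two_pow n).trans (akF_three_ge n))⟩
  exact (Nat.sInf_mem hne).1

theorem lt_of_invAck (n d : ℕ) (h : d + 2 ≤ invAck n) : akF d 3 < n := by
  by_contra hc
  push Not at hc
  have := alphaHier_le d n 3 hc
  have : invAck n ≤ d + 1 := Nat.sInf_le ⟨by omega, this⟩
  omega

/-- The growth majorant. -/
def growB (k m : ℕ) : ℕ := akF (k + 2) (5 * m + 3)

theorem pow_aux (Z : ℕ) (hZ : 10 ≤ Z) : Z * Z * Z + Z ≤ 2 ^ Z := by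
  induction Z, hZ using Nat.le_induction with
  | base => norm_num
  | succ Z hZ ih =>
    rw [pow_succ]
    nlinarith [mul_self_nonneg Z]

theorem pow_aux2 (Z : ℕ) (hZ : 8 ≤ Z) : 5 * Z + 3 ≤ 2 ^ Z := by
  induction Z, hZ using Nat.le_induction with
  | base => norm_num
  | succ Z hZ ih => rw [pow_succ]; omega

theorem growB_base (k m : ℕ) : m + 2 ≤ growB k m := by
  refine le_trans ?_ (akF_ge _ _)
  have : 5 * m + 3 < 2 ^ (5 * m + 3) := Nat.lt_two_pow_self
  omega

theorem growB_mono (k : ℕ) {m m' : ℕ} (h : m ≤ m') : growB k m ≤ growB k m' :=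
  akF_mono _ (by omega)

theorem growB_step (k m NL bL NV bV NT bT : ℕ)
    (h1 : NL ≤ growB (k + 1) m) (h2 : bL ≤ growB (k + 1) m)
    (h3 : NV ≤ growB k bL) (h4 : bV ≤ growB k bL)
    (h5 : NT ≤ growB k NV) (h6 : bT ≤ growB k NV) :
    NT + bT * bV * NL ≤ growB (k + 1) (m + 1) ∧ bT * bV * bL ≤ growB (k + 1) (m + 1) := by
  set X := growB (k + 1) m with hX
  set f := akF (k + 2) with hf
  have fm : Monotone f := akF_mono _
  have fge : ∀ x, 2 ^ x ≤ f x := akF_ge _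
  have hT : growB (k + 1) (m + 1) = f (f (f (f (f X)))) := by
    unfold growB at *
    rw [show 5 * (m + 1) + 3 = 5 * m + 3 + 1 + 1 + 1 + 1 + 1 by ring]
    rw [show k + 1 + 2 = k + 2 + 1 by ring] at *
    simp only [akF_succ_succ (k + 2), hX, hf]
  have X8 : 8 ≤ X := by
    refine le_trans ?_ (akF_ge _ _)
    calc 8 = 2 ^ 3 := by norm_num
      _ ≤ _ := Nat.pow_le_pow_right (by norm_num) (by omega)
  have flt : ∀ x, x < f x := fun x => lt_of_lt_of_le Nat.lt_two_pow_self (fge x)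
  have g1 : ∀ x y, 8 ≤ y → x ≤ y → growB k x ≤ f (f y) := by
    intro x y hy hxy
    refine (growB_mono k hxy).trans (fm ((pow_aux2 y hy).trans (fge y)))
  have a1 := flt X
  have a2 := flt (f X)
  have a3 := flt (f (f X))
  have a4 := flt (f (f (f X)))
  have b3 := h3.trans (g1 _ _ X8 h2)
  have b4 := h4.trans (g1 _ _ X8 h2)
  have b5 := h5.trans (g1 _ _ (by omega) b3)
  have b6 := h6.trans (g1 _ _ (by omega) b3)
  rw [hT]
  set Z := f (f (f (f X)))
  have hZ := (pow_aux Z (by omega)).trans (fge Z)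
  have c1 : bT * bV * NL ≤ Z * Z * Z := Nat.mul_le_mul (Nat.mul_le_mul b6 (by omega)) (by omega)
  have c2 : bT * bV * bL ≤ Z * Z * Z := Nat.mul_le_mul (Nat.mul_le_mul b6 (by omega)) (by omega)
  omega

theorem growB_final (k t n : ℕ) (h : k + 6 ≤ invAck n) : growB k (2 ^ Nat.choose k t) ≤ n := by
  have h1 := lt_of_invAck n (k + 4) h
  rw [show k + 4 = k + 2 + 2 by ring, akF_three_rec] at h1
  refine le_trans ?_ h1.le
  apply akF_mono
  refine le_trans ?_ (akF_three_ge k)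
  have hc : Nat.choose k t ≤ 2 ^ k := Nat.choose_le_two_pow k t
  have h2 : 2 ^ Nat.choose k t ≤ 2 ^ 2 ^ k := Nat.pow_le_pow_right (by norm_num) hc
  have h3 : 2 ^ (2 ^ k + 3) ≤ 2 ^ 2 ^ (k + 4) := by
    apply Nat.pow_le_pow_right (by norm_num)
    have : 1 ≤ 2 ^ k := Nat.one_le_two_pow
    rw [pow_add]; omega
  have h4 : 1 ≤ 2 ^ 2 ^ k := Nat.one_le_two_pow
  rw [pow_add] at h3
  omega

theorem real_final (t c : ℕ) : ∃ C : ℝ, ∀ a : ℕ, 1 ≤ a →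
    (1 / (Nat.factorial (t + 1) : ℝ)) * (a : ℝ) ^ (t + 1) - C * (a : ℝ) ^ t
      ≤ (Nat.choose (a - c) (t + 1) : ℝ) - 1 := by
  refine ⟨(t + 1) * (c + t + 1) + 1, fun a ha => ?_⟩
  have ha1 : (1 : ℝ) ≤ a := by exact_mod_cast ha
  have hat : (1 : ℝ) ≤ (a : ℝ) ^ t := one_le_pow₀ ha1
  have hf : (1 : ℝ) ≤ (Nat.factorial (t + 1) : ℝ) := by
    exact_mod_cast Nat.one_le_iff_ne_zero.2 (Nat.factorial_ne_zero _)
  have hfi : (1 : ℝ) / (Nat.factorial (t + 1) : ℝ) ≤ 1 := by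
    rw [div_le_one (by linarith)]; exact hf
  have hfi0 : (0 : ℝ) < 1 / (Nat.factorial (t + 1) : ℝ) := by positivity
  set q : ℝ := 1 / (Nat.factorial (t + 1) : ℝ) with hq
  have hbin : q * (a : ℝ) ^ (t + 1) - ((t + 1) * (c + t + 1)) * (a : ℝ) ^ t
      ≤ (Nat.choose (a - c) (t + 1) : ℝ) := by
    by_cases hbig : c + t + 1 ≤ a
    · obtain ⟨y, rfl⟩ := Nat.exists_eq_add_of_le hbig
      have hch : ((y + 1 : ℕ) : ℝ) ^ (t + 1) / (Nat.factorial (t + 1) : ℝ)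
          ≤ (Nat.choose (c + t + 1 + y - c) (t + 1) : ℝ) := by
        have := Nat.pow_le_choose (α := ℝ) (t + 1) (c + t + 1 + y - c)
        rwa [show c + t + 1 + y - c + 1 - (t + 1) = y + 1 by omega] at this
      refine le_trans ?_ hch
      have hB : ((c + t + 1 + y : ℕ) : ℝ) ^ (t + 1)
          - ((t + 1) * (c + t + 1)) * ((c + t + 1 + y : ℕ) : ℝ) ^ t ≤ ((y + 1 : ℕ) : ℝ) ^ (t + 1) := by
        set x : ℝ := ((c + t + 1 + y : ℕ) : ℝ) with hx
        have hx0 : 0 < x := by linarith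
        have hy : (y : ℝ) = x - (c + t + 1) := by rw [hx]; push_cast; ring
        have hy0 : (0 : ℝ) ≤ y := Nat.cast_nonneg _
        have hbern := one_add_mul_le_pow (a := -((c + t + 1) / x)) (by
          have : ((c : ℝ) + t + 1) / x ≤ 1 := by rw [div_le_one hx0]; linarith
          linarith) (t + 1)
        have e1 : (1 + -((c + t + 1) / x)) = (y : ℝ) / x := by
          rw [hy]; field_simp; ring
        rw [e1, div_pow, le_div_iff₀ (by positivity)] at hbern
        have e2 : (1 + ((t + 1 : ℕ) : ℝ) * -((c + t + 1) / x)) * x ^ (t + 1)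
            = x ^ (t + 1) - ((t + 1) * (c + t + 1)) * x ^ t := by
          push_cast; field_simp; ring
        rw [e2] at hbern
        refine hbern.trans ?_
        push_cast
        gcongr
        linarith
      rw [div_eq_mul_one_div, ← hq, mul_comm _ q]
      set x : ℝ := ((c + t + 1 + y : ℕ) : ℝ) with hx
      have h0 : 0 ≤ ((t + 1) * (c + t + 1)) * x ^ t := by positivity
      nlinarith
    · push Not at hbig
      have : (a : ℝ) ≤ c + t + 1 := by exact_mod_cast hbig.le
      have h1 : q * (a : ℝ) ^ (t + 1) ≤ ((t + 1) * (c + t + 1)) * (a : ℝ) ^ t := by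
        have t0 : (0 : ℝ) ≤ t := Nat.cast_nonneg _
        have c0 : (0 : ℝ) ≤ c := Nat.cast_nonneg _
        have : q * a ≤ (t + 1) * (c + t + 1) := by nlinarith
        calc q * (a : ℝ) ^ (t + 1) = (q * a) * (a : ℝ) ^ t := by ring
          _ ≤ _ := by gcongr
      have : (0 : ℝ) ≤ (Nat.choose (a - c) (t + 1) : ℝ) := Nat.cast_nonneg _
      linarith
  linarith

/-! ### Block sequences -/

section blocks

/-- The word of a sequence of blocks. -/
def wdB {A : Type} {m : ℕ} (W : List (Fin m → A)) : List A := W.flatMap List.ofFn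

/-- Any two symbols share at most one block, and around this block they are nested. -/
def GoodB {A : Type} [DecidableEq A] {m : ℕ} (W : List (Fin m → A)) : Prop :=
  ∀ P B Q, W = P ++ B :: Q → ∀ i j : Fin m, i < j →
    altC (B i) (B j) (wdB P) ≤ 1 ∧ altC (B j) (B i) (wdB Q) ≤ 1 ∧
    ∀ B' ∈ P ++ Q, ¬ (B i ∈ Set.range B' ∧ B j ∈ Set.range B')

/-- Existence of a block sequence with given parameters. -/
def SysB (t μ m N b : ℕ) : Prop :=
  ∃ (A : Type) (_ : Fintype A) (_ : DecidableEq A) (W : List (Fin m → A)),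
    Fintype.card A = N ∧ W.length = b ∧ (∀ B ∈ W, Function.Injective B) ∧ N * μ = m * b ∧
    (∀ x y : A, x ≠ y → altC x y (wdB W) ≤ 2 * t + 3) ∧ (1 ≤ t → GoodB W)

variable {A A' : Type} [DecidableEq A] [DecidableEq A'] {m : ℕ}

theorem wdB_append (P Q : List (Fin m → A)) : wdB (P ++ Q) = wdB P ++ wdB Q := by
  simp [wdB]

theorem wdB_cons (B : Fin m → A) (Q : List (Fin m → A)) :
    wdB (B :: Q) = List.ofFn B ++ wdB Q := by
  simp [wdB]

theorem mem_wdB {W : List (Fin m → A)} {x : A} : x ∈ wdB W ↔ ∃ B ∈ W, x ∈ Set.range B := by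
  simp [wdB, List.mem_flatMap, List.mem_ofFn]

theorem altC_palin (l : List A) (hl : l.Nodup) (a b : A) (hab : a ≠ b) :
    altC a b (l ++ l.reverse) ≤ 3 := by
  induction l with
  | nil => simp [altC]
  | cons c l ih =>
    simp at hl
    have ih := ih hl.2
    have e : (c :: l) ++ (c :: l).reverse = c :: ((l ++ l.reverse) ++ [c]) := by simp
    rw [e]
    by_cases hca : c = a
    · subst hca
      have h1 : c ∉ l ++ l.reverse := by simp [hl.1]
      have h2 := altC_not_mem_right hab.symm h1
      have h3 := altC_append (l ++ l.reverse) [c] b c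
      simp only [altC, if_true]
      rw [h3]
      simp only [altC]
      split_ifs <;> omega
    · by_cases hcb : c = b
      · subst hcb
        have h1 : c ∉ l ++ l.reverse := by simp [hl.1]
        have h2 := altC_not_mem_right hab h1
        have h3 := altC_append (l ++ l.reverse) [c] a c
        simp only [altC, hca, if_false]
        rw [h3]
        simp only [altC]
        split_ifs <;> omega
      · simp only [altC, hca, if_false]
        rw [altC_append]
        simp only [altC, hca, hcb, if_false]
        split_ifs <;> omega

theorem sys_two (m : ℕ) : SysB 0 2 m m 2 := by
  refine ⟨Fin m, inferInstance, inferInstance, [id, Fin.rev], by simp, by simp, ?_, rfl, ?_, by simp⟩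
  · intro B hB
    simp at hB
    rcases hB with rfl | rfl
    · exact Function.injective_id
    · exact Fin.rev_injective
  · intro x y hxy
    have : wdB [id, Fin.rev] = List.finRange m ++ (List.finRange m).reverse := by
      simp [wdB, List.ofFn_eq_map, List.finRange_reverse]
    rw [this]
    exact altC_palin _ (List.nodup_finRange m) x y hxy

theorem sys_one (t m : ℕ) : SysB t 1 m m 1 := by
  refine ⟨Fin m, inferInstance, inferInstance, [id], by simp, by simp, ?_, rfl, ?_, ?_⟩
  · intro B hB
    simp at hB
    subst hB
    exact Function.injective_id
  · intro x y hxy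
    have : wdB [id] = List.finRange m := by
      simp [wdB, List.ofFn_eq_map]
    rw [this]
    have h1 := (altC_count (List.finRange m) x y hxy).1
    have h2 := List.nodup_iff_count_le_one.1 (List.nodup_finRange m) x
    omega
  · intro _ P B Q h i j hij
    have h1 : P = [] ∧ Q = [] := by
      have := congrArg List.length h
      simp at this
      constructor <;> apply List.eq_nil_of_length_eq_zero <;> omega
    obtain ⟨rfl, rfl⟩ := h1
    simp [wdB, altC]

theorem sys_empty (t μ : ℕ) : SysB t μ 0 0 1 := by
  refine ⟨Empty, inferInstance, inferInstance, [Fin.elim0], by simp, by simp, ?_, by simp, ?_, ?_⟩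
  · intro B _ i; exact i.elim0
  · intro x; exact x.elim
  · intro _ P B Q h i; exact i.elim0

/-- Composition of block sequences. -/
def compB {N q : ℕ} (e : A' ≃ Fin N) (T : List (Fin N → A)) (V : List (Fin q → A')) :
    List (Fin q → A) :=
  T.flatMap (fun B => V.map (fun c i => B (e (c i))))

theorem wdB_comp {N q : ℕ} (e : A' ≃ Fin N) (T : List (Fin N → A)) (V : List (Fin q → A')) :
    wdB (compB e T V) = T.flatMap (fun B => (wdB V).map (fun c => B (e c))) := by
  simp only [wdB, compB, List.flatMap_assoc, List.flatMap_map, List.map_flatMap, List.map_ofFn]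
  rfl

/-- Off the shared blocks, composition does not increase alternation. -/
theorem comp_noshare {N : ℕ} (e : A' ≃ Fin N) (w : List A') (a b : A) (hab : a ≠ b)
    (T : List (Fin N → A)) (hT : ∀ B ∈ T, ¬ (a ∈ Set.range B ∧ b ∈ Set.range B)) :
    altC a b (T.flatMap (fun B => w.map (fun c => B (e c)))) ≤ altC a b (wdB T) ∧
    altC b a (T.flatMap (fun B => w.map (fun c => B (e c)))) ≤ altC b a (wdB T) := by
  induction T with
  | nil => simp [altC, wdB]
  | cons B T ih =>
    have ih := ih (fun B hB => hT B (List.mem_cons_of_mem _ hB))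
    have hB := hT B List.mem_cons_self
    rw [wdB_cons, List.flatMap_cons]
    have key : ∀ x y : A, x ≠ y → ¬ (x ∈ Set.range B ∧ y ∈ Set.range B) →
        altC x y (w.map (fun c => B (e c))) ≤ altC x y (List.ofFn B) := by
      intro x y hxy hn
      by_cases hx : x ∈ Set.range B
      · have hy : y ∉ Set.range B := fun h => hn ⟨hx, h⟩
        have h1 : y ∉ w.map (fun c => B (e c)) := by
          intro h
          simp only [List.mem_map] at h
          obtain ⟨c, _, rfl⟩ := h
          exact hy ⟨_, rfl⟩
        have h2 := altC_not_mem_right hxy h1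
        have h3 : x ∈ List.ofFn B := by simpa [List.mem_ofFn] using hx
        have h4 := altC_mem (b := y) h3
        omega
      · have h1 : x ∉ w.map (fun c => B (e c)) := by
          intro h
          simp only [List.mem_map] at h
          obtain ⟨c, _, rfl⟩ := h
          exact hx ⟨_, rfl⟩
        rw [altC_not_mem_left hxy h1]; omega
    have k1 := key a b hab hB
    have k2 := key b a hab.symm (fun h => hB h.symm)
    exact ⟨altC_append_mono k1 ih.1 ih.2, altC_append_mono k2 ih.2 ih.1⟩

theorem exists_order [Fintype A'] (w : List A') {N : ℕ} (hN : Fintype.card A' = N) :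
    ∃ e : A' ≃ Fin N, ∀ a b, e a < e b → w.idxOf a ≤ w.idxOf b := by
  let e0 := Fintype.equivFinOfCardEq hN
  let f : Fin N → ℕ := fun i => w.idxOf (e0.symm i)
  refine ⟨e0.trans (Tuple.sort f).symm, fun a b h => ?_⟩
  have := Tuple.monotone_sort f h.le
  simpa [f] using this

theorem comp_basic {N q t : ℕ} (e : A' ≃ Fin N) (V : List (Fin q → A'))
    (he : ∀ a b, e a < e b → (wdB V).idxOf a ≤ (wdB V).idxOf b)
    (hV : ∀ x y : A', x ≠ y → altC x y (wdB V) ≤ 2 * t + 3)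
    (T : List (Fin N → A)) (hTi : ∀ B ∈ T, Function.Injective B)
    (hT : ∀ x y : A, x ≠ y → altC x y (wdB T) ≤ 2 * (t + 1) + 3) (hG : GoodB T)
    (x y : A) (hxy : x ≠ y) :
    altC x y (wdB (compB e T V)) ≤ 2 * (t + 1) + 3 := by
  rw [wdB_comp]
  by_cases hs : ∀ B ∈ T, ¬ (x ∈ Set.range B ∧ y ∈ Set.range B)
  · exact (comp_noshare e (wdB V) x y hxy T hs).1.trans (hT x y hxy)
  · push Not at hs
    obtain ⟨B, hBT, ⟨i, hi⟩, ⟨j, hj⟩⟩ := hs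
    -- symmetric core statement
    have core : ∀ i j : Fin N, i < j →
        altC (B i) (B j) (T.flatMap (fun B => (wdB V).map (fun c => B (e c)))) ≤ 2 * (t + 1) + 3 ∧
        altC (B j) (B i) (T.flatMap (fun B => (wdB V).map (fun c => B (e c)))) ≤ 2 * (t + 1) + 3 := by
      intro i j hij
      obtain ⟨P, Q, hPQ⟩ := List.append_of_mem hBT
      obtain ⟨g1, g2, g3⟩ := hG P B Q hPQ i j hij
      have hBi := hTi B hBT
      have hne : B i ≠ B j := fun h => hij.ne (hBi h)
      have p := comp_noshare e (wdB V) (B i) (B j) hne P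
        (fun B' h => g3 B' (List.mem_append_left _ h))
      have q := comp_noshare e (wdB V) (B i) (B j) hne Q
        (fun B' h => g3 B' (List.mem_append_right _ h))
      have hinj : Function.Injective (fun c => B (e c)) := hBi.comp e.injective
      have hne' : e.symm i ≠ e.symm j := fun h => hij.ne (e.symm.injective h)
      have v1 := altC_map (fun c => B (e c)) hinj (wdB V) (e.symm i) (e.symm j)
      have v2 := altC_map (fun c => B (e c)) hinj (wdB V) (e.symm j) (e.symm i)
      simp only [Equiv.apply_symm_apply] at v1 v2
      have b1 := hV _ _ hne'
      have b2 := hV _ _ hne'.symm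
      have b3 := altC_idx (wdB V) (e.symm i) (e.symm j) hne' (he _ _ (by simpa using hij))
      rw [hPQ, List.flatMap_append, List.flatMap_cons]
      set P' := P.flatMap (fun B => (wdB V).map (fun c => B (e c)))
      set Q' := Q.flatMap (fun B => (wdB V).map (fun c => B (e c)))
      set V' := (wdB V).map (fun c => B (e c))
      have s1 := altC_swap P' (B i) (B j)
      have s2 := altC_swap P' (B j) (B i)
      have s3 := altC_swap Q' (B i) (B j)
      have s4 := altC_swap Q' (B j) (B i)
      simp only [altC_append]
      generalize altC (B i) (B j) P' = p1 at *
      generalize altC (B j) (B i) P' = p2 at *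
      generalize altC (B i) (B j) Q' = q1 at *
      generalize altC (B j) (B i) Q' = q2 at *
      generalize altC (B i) (B j) V' = w1 at *
      generalize altC (B j) (B i) V' = w2 at *
      constructor
      · split_ifs <;> omega
      · split_ifs <;> omega
    rcases lt_trichotomy i j with h | h | h
    · have := (core i j h).1; rwa [hi, hj] at this
    · exfalso; apply hxy; rw [← hi, ← hj, h]
    · have := (core j i h).2; rwa [hi, hj] at this

theorem flatMap_split {α β : Type} (f : α → List β) (l : List α) :
    ∀ (P : List β) (B : β) (Q : List β), l.flatMap f = P ++ B :: Q →
    ∃ l1 x l2 P' Q', l = l1 ++ x :: l2 ∧ f x = P' ++ B :: Q' ∧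
      P = l1.flatMap f ++ P' ∧ Q = Q' ++ l2.flatMap f := by
  induction l with
  | nil => intro P B Q h; simp at h
  | cons c l ih =>
    intro P B Q h
    rw [List.flatMap_cons, List.append_eq_append_iff] at h
    rcases h with ⟨as, h1, h2⟩ | ⟨bs, h1, h2⟩
    · obtain ⟨l1, x, l2, P', Q', e1, e2, e3, e4⟩ := ih as B Q h2
      exact ⟨c :: l1, x, l2, P', Q', by simp [e1], e2, by simp [h1, e3], e4⟩
    · rcases bs with _ | ⟨d, bs⟩
      · obtain ⟨l1, x, l2, P', Q', e1, e2, e3, e4⟩ := ih [] B Q (by simpa using h2.symm)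
        refine ⟨c :: l1, x, l2, P', Q', by simp [e1], e2, ?_, e4⟩
        simp at h1
        simp [h1]
        simpa using e3
      · simp at h2
        obtain ⟨rfl, h2⟩ := h2
        exact ⟨[], c, l, P, bs, by simp, h1, by simp, h2⟩

end blocks

section shuffle
variable {A A' : Type} [DecidableEq A] [DecidableEq A'] {m : ℕ}

/-- One block of the shuffle. -/
def cellB (L : List (Fin m → A')) (T : List (Fin L.length → A)) (p : Fin T.length)
    (i : Fin L.length) : Fin (m + 1) → A ⊕ (Fin T.length × A') :=
  Fin.snoc (α := fun _ => A ⊕ (Fin T.length × A')) (fun j => Sum.inr (p, L.get i j))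
    (Sum.inl (T.get p i))

/-- One decorated copy of `L`. -/
def copyB (L : List (Fin m → A')) (T : List (Fin L.length → A)) (p : Fin T.length) :
    List (Fin (m + 1) → A ⊕ (Fin T.length × A')) :=
  (List.finRange L.length).map (cellB L T p)

/-- The shuffle. -/
def shufB (L : List (Fin m → A')) (T : List (Fin L.length → A)) :
    List (Fin (m + 1) → A ⊕ (Fin T.length × A')) :=
  (List.finRange T.length).flatMap (copyB L T)

/-- Projection to the copy `p`. -/
def projR {n : ℕ} (p : Fin n) : A ⊕ (Fin n × A') → Option A'
  | Sum.inl _ => none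
  | Sum.inr q => if q.1 = p then some q.2 else none

/-- Projection to the master symbols. -/
def projL {n : ℕ} : A ⊕ (Fin n × A') → Option A
  | Sum.inl a => some a
  | Sum.inr _ => none

theorem projR_iff {n : ℕ} (p : Fin n) (y : A') (x : A ⊕ (Fin n × A')) :
    projR p x = some y ↔ x = Sum.inr (p, y) := by
  rcases x with a | ⟨q, z⟩
  · simp [projR]
  · by_cases h : q = p <;> simp [projR, h]

theorem projL_iff {n : ℕ} (y : A) (x : A ⊕ (Fin n × A')) :
    projL x = some y ↔ x = Sum.inl y := by
  rcases x with a | ⟨q, z⟩ <;> simp [projL]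

theorem ofFn_cell (L : List (Fin m → A')) (T : List (Fin L.length → A)) (p : Fin T.length)
    (i : Fin L.length) :
    List.ofFn (cellB L T p i) =
      (List.ofFn (L.get i)).map (fun y => Sum.inr (p, y)) ++ [Sum.inl (T.get p i)] := by
  rw [List.ofFn_succ_last]
  simp only [cellB, Fin.snoc_castSucc, Fin.snoc_last, List.map_ofFn]
  rfl

theorem mem_cell_inr (L : List (Fin m → A')) (T : List (Fin L.length → A)) (p q : Fin T.length)
    (i : Fin L.length) (y : A') :
    Sum.inr (q, y) ∈ Set.range (cellB L T p i) ↔ p = q ∧ y ∈ Set.range (L.get i) := by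
  have : Sum.inr (q, y) ∈ List.ofFn (cellB L T p i) ↔ p = q ∧ y ∈ Set.range (L.get i) := by
    rw [ofFn_cell]
    simp only [List.mem_append, List.mem_map, List.mem_ofFn, List.mem_singleton]
    constructor
    · rintro (⟨a, ha, h⟩ | h)
      · simp at h
        exact ⟨h.1, h.2 ▸ ha⟩
      · simp at h
    · rintro ⟨rfl, h⟩
      exact Or.inl ⟨y, h, rfl⟩
  rwa [List.mem_ofFn] at this

theorem mem_cell_inl (L : List (Fin m → A')) (T : List (Fin L.length → A)) (p : Fin T.length)
    (i : Fin L.length) (a : A) :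
    Sum.inl a ∈ Set.range (cellB L T p i) ↔ T.get p i = a := by
  have : Sum.inl a ∈ List.ofFn (cellB L T p i) ↔ T.get p i = a := by
    rw [ofFn_cell]
    simp [eq_comm]
  rwa [List.mem_ofFn] at this

theorem filterR_cells (L : List (Fin m → A')) (T : List (Fin L.length → A)) (p : Fin T.length)
    (r : List (Fin L.length)) :
    (wdB (r.map (cellB L T p))).filterMap (projR p) = wdB (r.map L.get) := by
  induction r with
  | nil => simp [wdB]
  | cons i r ih =>
    simp only [List.map_cons, wdB_cons, List.filterMap_append, ih, ofFn_cell, List.filterMap_map]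
    have h1 : (projR (A := A) p ∘ fun y : A' => Sum.inr (p, y)) = some := by
      funext y; simp [projR]
    rw [h1, List.filterMap_some]
    simp [projR]

theorem filterR_cells_ne (L : List (Fin m → A')) (T : List (Fin L.length → A))
    (p q : Fin T.length) (h : q ≠ p) (r : List (Fin L.length)) :
    (wdB (r.map (cellB L T q))).filterMap (projR p) = [] := by
  induction r with
  | nil => simp [wdB]
  | cons i r ih =>
    simp only [List.map_cons, wdB_cons, List.filterMap_append, ih, ofFn_cell]
    simp [projR, Function.comp_def, h]

theorem filterL_cells (L : List (Fin m → A')) (T : List (Fin L.length → A)) (p : Fin T.length)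
    (r : List (Fin L.length)) :
    (wdB (r.map (cellB L T p))).filterMap projL = r.map (T.get p) := by
  induction r with
  | nil => simp [wdB]
  | cons i r ih =>
    simp only [List.map_cons, wdB_cons, List.filterMap_append, ih, ofFn_cell]
    simp [projL, Function.comp_def]

theorem filterR_copies (L : List (Fin m → A')) (T : List (Fin L.length → A)) (p : Fin T.length)
    (l : List (Fin T.length)) (h : p ∉ l) :
    (wdB (l.flatMap (copyB L T))).filterMap (projR p) = [] := by
  induction l with
  | nil => simp [wdB]
  | cons q l ih =>
    simp at h
    rw [List.flatMap_cons, wdB_append, List.filterMap_append, ih h.2, copyB,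
      filterR_cells_ne L T p q (Ne.symm h.1)]
    rfl

theorem filterL_copies (L : List (Fin m → A')) (T : List (Fin L.length → A))
    (l : List (Fin T.length)) :
    (wdB (l.flatMap (copyB L T))).filterMap projL = wdB (l.map T.get) := by
  induction l with
  | nil => simp [wdB]
  | cons q l ih =>
    rw [List.flatMap_cons, wdB_append, List.filterMap_append, ih, copyB, filterL_cells,
      List.map_cons, wdB_cons, List.ofFn_eq_map]

theorem not_mem_copies (L : List (Fin m → A')) (T : List (Fin L.length → A)) (p : Fin T.length)
    (l : List (Fin T.length)) (h : p ∉ l) (y : A') :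
    Sum.inr (p, y) ∉ wdB (l.flatMap (copyB L T)) := by
  intro hm
  have h1 := filterR_copies L T p l h
  have h2 : y ∈ (wdB (l.flatMap (copyB L T))).filterMap (projR p) :=
    List.mem_filterMap.2 ⟨_, hm, (projR_iff p y _).2 rfl⟩
  rw [h1] at h2
  simp at h2

theorem split_fin {n : ℕ} (p : Fin n) : ∃ l1 l2 : List (Fin n),
    List.finRange n = l1 ++ p :: l2 ∧ p ∉ l1 ∧ p ∉ l2 := by
  obtain ⟨l1, l2, h⟩ := List.append_of_mem (List.mem_finRange p)
  have hn := List.nodup_finRange n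
  rw [h, List.nodup_append] at hn
  refine ⟨l1, l2, h, fun h1 => hn.2.2 p h1 p (by simp) rfl, ?_⟩
  have := hn.2.1
  simp at this
  exact this.1

theorem fin_split_notMem {n : ℕ} {p : Fin n} {l1 l2 : List (Fin n)}
    (h : List.finRange n = l1 ++ p :: l2) : p ∉ l1 ∧ p ∉ l2 := by
  have hn := List.nodup_finRange n
  rw [h, List.nodup_append] at hn
  refine ⟨fun h1 => hn.2.2 p h1 p (by simp) rfl, ?_⟩
  have := hn.2.1
  simp at this
  exact this.1

theorem map_get_finRange {α : Type} (l : List α) : (List.finRange l.length).map l.get = l := by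
  rw [← List.ofFn_eq_map, List.ofFn_get]

theorem cell_injective (L : List (Fin m → A')) (T : List (Fin L.length → A))
    (hL : ∀ B ∈ L, Function.Injective B) (p : Fin T.length)
    (i : Fin L.length) : Function.Injective (cellB L T p i) := by
  have : (List.ofFn (cellB L T p i)).Nodup := by
    rw [ofFn_cell, List.nodup_append]
    refine ⟨List.Nodup.map (fun a b h => by simpa using h)
      (List.nodup_ofFn.2 (hL _ (List.get_mem _ _))), by simp, ?_⟩
    intro a ha b hb
    simp only [List.mem_map, List.mem_singleton] at ha hb
    obtain ⟨y, _, rfl⟩ := ha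
    subst hb
    simp
  exact List.nodup_ofFn.1 this

theorem shuf_good (L : List (Fin m → A')) (T : List (Fin L.length → A))
    (hT : ∀ B ∈ T, Function.Injective B) (hG : GoodB L) : GoodB (shufB L T) := by
  intro P D Q hPQ i j hij
  obtain ⟨l1, p, l2, P', Q', e1, e2, rfl, rfl⟩ := flatMap_split _ _ P D Q hPQ
  obtain ⟨hp1, hp2⟩ := fin_split_notMem e1
  unfold copyB at e2
  rw [List.map_eq_append_iff] at e2
  obtain ⟨r1, r2', e3, rfl, e4⟩ := e2
  rw [List.map_eq_cons_iff] at e4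
  obtain ⟨c, r2, rfl, rfl, rfl⟩ := e4
  obtain ⟨hc1, hc2⟩ := fin_split_notMem e3
  have hTp : Function.Injective (T.get p) := hT _ (List.get_mem _ _)
  have memcase : ∀ B' ∈ (l1.flatMap (copyB L T) ++ r1.map (cellB L T p)) ++
      (r2.map (cellB L T p) ++ l2.flatMap (copyB L T)),
      ∃ q c', B' = cellB L T q c' ∧ (q = p → c' ∈ r1 ++ r2) := by
    intro B' hB'
    simp only [List.mem_append, List.mem_flatMap, List.mem_map, copyB] at hB'
    rcases hB' with (⟨q, hq, c', _, rfl⟩ | ⟨c', hc', rfl⟩) | (⟨c', hc', rfl⟩ | ⟨q, hq, c', _, rfl⟩)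
    · exact ⟨q, c', rfl, fun h => absurd (h ▸ hq) hp1⟩
    · exact ⟨p, c', rfl, fun _ => by simp [hc']⟩
    · exact ⟨p, c', rfl, fun _ => by simp [hc']⟩
    · exact ⟨q, c', rfl, fun h => absurd (h ▸ hq) hp2⟩
  have hi : i ≠ Fin.last m := fun h => by
    rw [h] at hij; exact absurd hij (not_lt.2 (Fin.le_last j))
  obtain ⟨i, rfl⟩ := Fin.exists_castSucc_eq.2 hi
  have ei : cellB L T p c i.castSucc = Sum.inr (p, L.get c i) := by simp [cellB]
  by_cases hj : j = Fin.last m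
  · subst hj
    have ej : cellB L T p c (Fin.last m) = Sum.inl (T.get p c) := by simp [cellB]
    rw [ei, ej]
    have hne : (Sum.inr (p, L.get c i) : A ⊕ (Fin T.length × A')) ≠ Sum.inl (T.get p c) := by simp
    have nomaster : ∀ r : List (Fin L.length), c ∉ r →
        (Sum.inl (T.get p c) : A ⊕ (Fin T.length × A')) ∉ wdB (r.map (cellB L T p)) := by
      intro r hr hm
      have h2 : T.get p c ∈ (wdB (r.map (cellB L T p))).filterMap projL :=
        List.mem_filterMap.2 ⟨_, hm, (projL_iff _ _).2 rfl⟩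
      rw [filterL_cells, List.mem_map] at h2
      obtain ⟨c', hc', h3⟩ := h2
      exact hr (hTp h3 ▸ hc')
    refine ⟨?_, ?_, ?_⟩
    · rw [wdB_append, altC_append, altC_not_mem_left hne (not_mem_copies L T p l1 hp1 _)]
      simpa using altC_not_mem_right hne (nomaster r1 hc1)
    · rw [wdB_append, altC_append, altC_not_mem_left hne.symm (nomaster r2 hc2)]
      simpa using altC_not_mem_right hne.symm (not_mem_copies L T p l2 hp2 _)
    · intro B' hB'
      obtain ⟨q, c', rfl, h⟩ := memcase B' hB'
      rw [mem_cell_inr, mem_cell_inl]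
      rintro ⟨⟨rfl, _⟩, h2⟩
      have := hTp h2
      subst this
      have := h rfl
      simp [hc1, hc2] at this
  · obtain ⟨j, rfl⟩ := Fin.exists_castSucc_eq.2 hj
    have ej : cellB L T p c j.castSucc = Sum.inr (p, L.get c j) := by simp [cellB]
    rw [ei, ej]
    have hL : L = r1.map L.get ++ L.get c :: r2.map L.get := by
      conv_lhs => rw [← map_get_finRange L, e3]
      simp
    obtain ⟨g1, g2, g3⟩ := hG _ _ _ hL i j (by simpa using hij)
    refine ⟨?_, ?_, ?_⟩
    · rw [← altC_filterMap (projR p) _ _ _ (L.get c i) (L.get c j) (projR_iff p _) (projR_iff p _),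
        wdB_append, List.filterMap_append, filterR_copies L T p l1 hp1, filterR_cells]
      exact g1
    · rw [← altC_filterMap (projR p) _ _ _ (L.get c j) (L.get c i) (projR_iff p _) (projR_iff p _),
        wdB_append, List.filterMap_append, filterR_copies L T p l2 hp2, filterR_cells]
      simpa using g2
    · intro B' hB'
      obtain ⟨q, c', rfl, h⟩ := memcase B' hB'
      rw [mem_cell_inr, mem_cell_inr]
      rintro ⟨⟨rfl, h1⟩, _, h2⟩
      have := h rfl
      refine g3 (L.get c') ?_ ⟨h1, h2⟩
      rw [List.mem_append] at this ⊢
      rcases this with h | h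
      · exact Or.inl (List.mem_map_of_mem h)
      · exact Or.inr (List.mem_map_of_mem h)

theorem altC_three {α : Type} [DecidableEq α] (u v w : List α) (a b : α) (hab : a ≠ b)
    (k : ℕ) (hu : a ∉ u) (hw : a ∉ w) (h1 : altC a b v ≤ k) (h2 : altC b a v ≤ k) :
    altC a b (u ++ (v ++ w)) ≤ k + 2 ∧ altC b a (u ++ (v ++ w)) ≤ k + 2 := by
  have u1 := altC_not_mem_left hab hu
  have u2 := altC_not_mem_right hab.symm hu
  have w1 := altC_not_mem_left hab hw
  have w2 := altC_not_mem_right hab.symm hw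
  simp only [altC_append]
  constructor <;> split_ifs <;> omega

theorem shuf_basic (t : ℕ) (L : List (Fin m → A')) (T : List (Fin L.length → A))
    (hT : ∀ B ∈ T, Function.Injective B)
    (hTb : ∀ x y : A, x ≠ y → altC x y (wdB T) ≤ 2 * (t + 1) + 3)
    (hLb : ∀ x y : A', x ≠ y → altC x y (wdB L) ≤ 2 * (t + 1) + 3)
    (x y : A ⊕ (Fin T.length × A')) (hxy : x ≠ y) :
    altC x y (wdB (shufB L T)) ≤ 2 * (t + 1) + 3 := by
  -- mixed case
  have splitw : ∀ p : Fin T.length, ∃ l1 l2 : List (Fin T.length), p ∉ l1 ∧ p ∉ l2 ∧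
      wdB (shufB L T) = wdB (l1.flatMap (copyB L T)) ++
        (wdB (copyB L T p) ++ wdB (l2.flatMap (copyB L T))) := by
    intro p
    obtain ⟨l1, l2, h, h1, h2⟩ := split_fin p
    refine ⟨l1, l2, h1, h2, ?_⟩
    rw [shufB, h, List.flatMap_append, List.flatMap_cons, wdB_append, wdB_append]
  have mixed : ∀ (a : A) (p : Fin T.length) (z : A'),
      altC (Sum.inr (p, z)) (Sum.inl a) (wdB (shufB L T)) ≤ 3 + 2 ∧
      altC (Sum.inl a) (Sum.inr (p, z)) (wdB (shufB L T)) ≤ 3 + 2 := by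
    intro a p z
    obtain ⟨l1, l2, h1, h2, e⟩ := splitw p
    rw [e]
    have hc := count_filterMap_eq projL (wdB (copyB L T p)) (Sum.inl a) a (projL_iff a)
    have e2 : (wdB (copyB L T p)).filterMap projL = (List.finRange L.length).map (T.get p) :=
      filterL_cells L T p _
    rw [e2] at hc
    have hc1 : ((List.finRange L.length).map (T.get p)).count a ≤ 1 :=
      List.nodup_iff_count_le_one.1
        ((List.nodup_finRange _).map (hT _ (List.get_mem _ _))) a
    have hne : (Sum.inr (p, z) : A ⊕ (Fin T.length × A')) ≠ Sum.inl a := by simp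
    have k1 := altC_count (wdB (copyB L T p)) _ _ hne
    have k2 := altC_count (wdB (copyB L T p)) _ _ hne.symm
    exact altC_three _ _ _ _ _ hne 3 (not_mem_copies L T p l1 h1 z) (not_mem_copies L T p l2 h2 z)
      (by omega) (by omega)
  rcases x with a | ⟨p, x⟩ <;> rcases y with b | ⟨q, y⟩
  · rw [← altC_filterMap projL _ _ _ a b (projL_iff _) (projL_iff _), shufB, filterL_copies,
      map_get_finRange]
    exact hTb a b (by simpa using hxy)
  · exact (mixed a q y).2.trans (by omega)
  · exact (mixed b p x).1.trans (by omega)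
  · obtain ⟨l1, l2, h1, h2, e⟩ := splitw p
    by_cases hpq : p = q
    · subst hpq
      rw [← altC_filterMap (projR p) _ _ _ x y (projR_iff p _) (projR_iff p _), e,
        List.filterMap_append, List.filterMap_append, filterR_copies L T p l1 h1,
        filterR_copies L T p l2 h2, copyB, filterR_cells, map_get_finRange]
      simpa using hLb x y (by simpa using hxy)
    · rw [e]
      have hn : (Sum.inr (q, y) : A ⊕ (Fin T.length × A')) ∉ wdB (copyB L T p) := by
        have := not_mem_copies L T q [p] (by simpa using Ne.symm hpq) y
        simpa using this
      have k1 := altC_not_mem_right hxy hn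
      have k2 := altC_not_mem_left hxy.symm hn
      have := (altC_three _ _ _ _ _ hxy 1 (not_mem_copies L T p l1 h1 x)
        (not_mem_copies L T p l2 h2 x) k1 (by omega)).1
      omega

end shuffle

theorem length_flatMap_const {α β : Type} (l : List α) (f : α → List β) (n : ℕ)
    (h : ∀ x ∈ l, (f x).length = n) : (l.flatMap f).length = l.length * n := by
  induction l with
  | nil => simp
  | cons c l ih =>
    rw [List.flatMap_cons, List.length_append, ih (fun x hx => h x (List.mem_cons_of_mem _ hx)),
      h c List.mem_cons_self, List.length_cons]
    ring

theorem sys_step (t μ1 μ2 m NL bL NV bV NT bT : ℕ) (hL : SysB (t + 1) (μ1 * μ2) m NL bL)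
    (hV : SysB t μ1 bL NV bV) (hT : SysB (t + 1) μ2 NV NT bT) :
    SysB (t + 1) (μ1 * μ2) (m + 1) (NT + bT * bV * NL) (bT * bV * bL) := by
  obtain ⟨AL, _, _, L, cL, lL, iL, nL, bsL, gL⟩ := hL
  subst lL
  obtain ⟨AV, _, _, V, cV, lV, iV, nV, bsV, gV⟩ := hV
  obtain ⟨AT, _, _, T, cT, lT, iT, nT, bsT, gT⟩ := hT
  obtain ⟨e, he⟩ := exists_order (wdB V) cV
  have hT'i : ∀ B ∈ compB e T V, Function.Injective B := by
    intro B hB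
    simp only [compB, List.mem_flatMap, List.mem_map] at hB
    obtain ⟨B0, h0, c, hc, rfl⟩ := hB
    exact (iT B0 h0).comp (e.injective.comp (iV c hc))
  have hlen : (compB e T V).length = bT * bV := by
    rw [compB, length_flatMap_const _ _ bV (by simp [lV]), lT]
  refine ⟨AT ⊕ (Fin (compB e T V).length × AL), inferInstance, inferInstance,
    shufB L (compB e T V), ?_, ?_, ?_, ?_, ?_, ?_⟩
  · simp [cT, cL, hlen]
  · rw [shufB, length_flatMap_const _ _ L.length (by simp [copyB]), List.length_finRange, hlen]
  · intro B hB
    simp only [shufB, copyB, List.mem_flatMap, List.mem_map] at hB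
    obtain ⟨p, _, i, _, rfl⟩ := hB
    exact cell_injective L _ iL p i
  · calc (NT + bT * bV * NL) * (μ1 * μ2) = (NT * μ2) * μ1 + bT * bV * (NL * (μ1 * μ2)) := by ring
      _ = bT * (NV * μ1) + bT * bV * (m * L.length) := by rw [nT, nL]; ring
      _ = _ := by rw [nV]; ring
  · exact shuf_basic t L _ hT'i
      (comp_basic e V he bsV T iT bsT (gT (by omega))) bsL
  · intro _
    exact shuf_good L _ hT'i (gL (by omega))

theorem sys_exists (t : ℕ) : ∀ k m : ℕ, ∃ N b, SysB t (2 ^ Nat.choose k t) m N b ∧ 1 ≤ b ∧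
    N ≤ growB k m ∧ b ≤ growB k m := by
  induction t with
  | zero =>
    intro k m
    have := growB_base k m
    exact ⟨m, 2, by simpa using sys_two m, by omega, by omega, by omega⟩
  | succ t iht =>
    intro k
    induction k with
    | zero =>
      intro m
      have := growB_base 0 m
      exact ⟨m, 1, by simpa using sys_one (t + 1) m, by omega, by omega, by omega⟩
    | succ k ihk =>
      intro m
      induction m with
      | zero =>
        have := growB_base (k + 1) 0
        exact ⟨0, 1, sys_empty _ _, by omega, by omega, by omega⟩
      | succ m ihm =>
        obtain ⟨NL, bL, sL, pL, h1, h2⟩ := ihm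
        obtain ⟨NV, bV, sV, pV, h3, h4⟩ := iht k bL
        obtain ⟨NT, bT, sT, pT, h5, h6⟩ := ihk NV
        have e : 2 ^ Nat.choose (k + 1) (t + 1) = 2 ^ Nat.choose k t * 2 ^ Nat.choose k (t + 1) := by
          rw [Nat.choose_succ_succ, pow_add]
        rw [e] at sL ⊢
        have h := growB_step k m NL bL NV bV NT bT h1 h2 h3 h4 h5 h6
        exact ⟨_, _, sys_step t _ _ m NL bL NV bV NT bT sL sV sT,
          Nat.mul_pos (Nat.mul_pos pT pV) pL, h.1, h.2⟩

section final
variable {A : Type} [DecidableEq A] {m : ℕ}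

/-- One tagged copy. -/
def tagB (q : ℕ) (W : List (Fin m → A)) (p : Fin q) : List (Fin m → Fin q × A) :=
  W.map (fun B j => (p, B j))

theorem wdB_tag (q : ℕ) (W : List (Fin m → A)) (p : Fin q) :
    wdB (tagB q W p) = (wdB W).map (fun x => (p, x)) := by
  simp only [wdB, tagB, List.flatMap_map, List.map_flatMap, List.map_ofFn]
  rfl

theorem wdB_flatMap {α : Type} (l : List α) (f : α → List (Fin m → A)) :
    wdB (l.flatMap f) = l.flatMap (fun x => wdB (f x)) := by
  simp [wdB, List.flatMap_assoc]

theorem copies_basic (t q : ℕ) (W : List (Fin m → A))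
    (hW : ∀ x y : A, x ≠ y → altC x y (wdB W) ≤ 2 * t + 3) (x y : Fin q × A) (hxy : x ≠ y) :
    altC x y (wdB ((List.finRange q).flatMap (tagB q W))) ≤ 2 * t + 3 := by
  obtain ⟨p, x⟩ := x
  obtain ⟨p', y⟩ := y
  obtain ⟨l1, l2, h, h1, h2⟩ := split_fin p
  rw [h, List.flatMap_append, List.flatMap_cons, wdB_append, wdB_append]
  have hn : ∀ (l : List (Fin q)) (p : Fin q) (z : A), p ∉ l → (p, z) ∉ wdB (l.flatMap (tagB q W)) := by
    intro l p z hp hm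
    rw [wdB_flatMap, List.mem_flatMap] at hm
    obtain ⟨p'', hp'', hm⟩ := hm
    rw [wdB_tag, List.mem_map] at hm
    obtain ⟨_, _, h⟩ := hm
    simp at h
    exact hp (h.1 ▸ hp'')
  by_cases hp : p = p'
  · subst hp
    have a1 := altC_not_mem_left hxy (hn l1 p x h1)
    have a2 := altC_not_mem_left hxy (hn l2 p x h2)
    have a3 := altC_not_mem_left hxy.symm (hn l2 p y h2)
    have a4 : altC (p, x) (p, y) (wdB (tagB q W p)) ≤ 2 * t + 3 := by
      rw [wdB_tag]
      have := altC_map (fun x : A => (p, x)) (fun a b h => by simpa using h) (wdB W) x y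
      rw [this]
      exact hW x y (by simpa using hxy)
    simp only [altC_append, a1, a2, a3]
    simpa using a4
  · have hy : (p', y) ∉ wdB (tagB q W p) := by
      have := hn [p] p' y (by simpa using Ne.symm hp)
      simpa using this
    have k1 := altC_not_mem_right hxy hy
    have k2 := altC_not_mem_left hxy.symm hy
    have := (altC_three _ _ _ _ _ hxy 1 (hn l1 p x h1) (hn l2 p x h2) k1 (by omega)).1
    omega

theorem sublist_of_rows (n : ℕ) (W : List (Fin m → A)) (hl : W.length ≤ n) :
    ∀ (r : ℕ) (x : Fin r → A) (row : Fin r → ℕ), StrictMono row →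
      (∀ i, ∃ h : row i < W.length, x i ∈ Set.range (W.get ⟨row i, h⟩)) →
      (List.ofFn x).Sublist (wdB W) := by
  clear hl
  induction W with
  | nil =>
    intro r x row _ h
    rcases r with _ | r
    · simp
    · obtain ⟨h, _⟩ := h 0; simp at h
  | cons B W ih =>
    intro r x row hrow h
    rcases r with _ | r
    · simp
    · rw [wdB_cons]
      by_cases h0 : row 0 = 0
      · have hx0 : x 0 ∈ List.ofFn B := by
          obtain ⟨h1, h2⟩ := h 0
          rw [List.mem_ofFn]
          simpa [h0] using h2
        rw [List.ofFn_succ]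
        have hpos : ∀ i : Fin r, 1 ≤ row i.succ := by
          intro i
          have := hrow (Fin.succ_pos i)
          omega
        have := ih r (fun i => x i.succ) (fun i => row i.succ - 1) (by
          intro i j hij
          have := hrow (Fin.succ_lt_succ_iff.2 hij)
          have := hpos i
          have := hpos j
          simp only
          omega) (by
          intro i
          obtain ⟨h1, h2⟩ := h i.succ
          have hp := hpos i
          simp only [List.length_cons] at h1
          refine ⟨by omega, ?_⟩
          obtain ⟨z, hz⟩ := Nat.exists_eq_add_of_le' hp
          simp only [hz] at h2 ⊢
          simpa using h2)
        exact (List.singleton_sublist.2 hx0).append this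
      · have hpos : ∀ i : Fin (r + 1), 1 ≤ row i := by
          intro i
          have := hrow.monotone (Fin.zero_le i)
          omega
        have := ih (r + 1) x (fun i => row i - 1) (by
          intro i j hij
          have := hrow hij
          have := hpos i
          have := hpos j
          simp only
          omega) (by
          intro i
          obtain ⟨h1, h2⟩ := h i
          have hp := hpos i
          simp only [List.length_cons] at h1
          refine ⟨by omega, ?_⟩
          obtain ⟨z, hz⟩ := Nat.exists_eq_add_of_le' hp
          simp only [hz] at h2 ⊢
          simpa using h2)
        exact this.trans (List.sublist_append_right _ _)

/-- The matrix of a block sequence. -/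
noncomputable def matB (n : ℕ) (W : List (Fin m → A)) (ι : A → Fin n) : Fin n → Fin n → Bool :=
  open Classical in
  fun i j => decide (∃ (h : i.val < W.length) (c : Fin m), ι (W.get ⟨i.val, h⟩ c) = j)

theorem matB_iff (n : ℕ) (W : List (Fin m → A)) (ι : A → Fin n) (i j : Fin n) :
    matB n W ι i j = true ↔
      ∃ (h : i.val < W.length) (c : Fin m), ι (W.get ⟨i.val, h⟩ c) = j := by
  simp [matB]

theorem exists_ofFn {α : Type*} (l : List α) (r : ℕ) (h : l.length = r) :
    ∃ f : Fin r → α, l = List.ofFn f := by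
  subst h; exact ⟨l.get, (List.ofFn_get l).symm⟩

theorem matB_not_full (n k t : ℕ) (hk : 2 * t + 2 ≤ k) (W : List (Fin m → A)) (hl : W.length ≤ n)
    (ι : A → Fin n) (hι : Function.Injective ι)
    (hW : ∀ x y : A, x ≠ y → altC x y (wdB W) ≤ 2 * t + 3) : ¬ IsFull (k + 1) (matB n W ι) := by
  rintro ⟨c, hc, hfull⟩
  have hsym : ∀ b, ∃ x : A, ι x = c b := by
    intro b
    obtain ⟨r, _, hr⟩ := hfull 1
    obtain ⟨h, c', hc'⟩ := (matB_iff _ _ _ _ _).1 (hr b)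
    exact ⟨_, hc'⟩
  choose x hx using hsym
  have hxi : Function.Injective x := by
    intro b b' h
    apply hc.injective
    rw [← hx, ← hx, h]
  obtain ⟨k', rfl⟩ : ∃ k', k = k' + 1 := ⟨k - 1, by omega⟩
  obtain ⟨a, _, b, _, hab, hle⟩ := exists_alt_of_all_orders k' (Finset.univ.image x) (wdB W)
    (by rw [Finset.card_image_of_injective _ hxi]; simp) (by
      intro l hl1 hl2
      have hlen : l.length = k' + 1 + 1 := by
        rw [← List.toFinset_card_of_nodup hl1, hl2, Finset.card_image_of_injective _ hxi]; simp
      obtain ⟨f, rfl⟩ := exists_ofFn l _ hlen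
      have hfi : Function.Injective f := List.nodup_ofFn.1 hl1
      have hfx : ∀ i, ∃ b, x b = f i := by
        intro i
        have : f i ∈ (List.ofFn f).toFinset := List.mem_toFinset.2 (List.mem_ofFn.2 ⟨i, rfl⟩)
        rw [hl2] at this
        simpa using this
      choose τ hτ using hfx
      have hτi : Function.Injective τ := by
        intro i j h
        apply hfi
        rw [← hτ, ← hτ, h]
      let σ : Equiv.Perm (Fin (k' + 1 + 1)) :=
        Equiv.ofBijective τ (Finite.injective_iff_bijective.1 hτi)
      obtain ⟨r, hr, hM⟩ := hfull σ.symm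
      refine sublist_of_rows n W hl _ f (fun i => (r i).val) (fun i j h => hr h) ?_
      intro i
      have := hM (σ i)
      rw [Equiv.symm_apply_apply, matB_iff] at this
      obtain ⟨h, c', hc'⟩ := this
      refine ⟨h, c', ?_⟩
      apply hι
      rw [hc', ← hτ i, hx]
      rfl)
  have := hW a b hab
  omega

theorem matB_ones (n : ℕ) (W : List (Fin m → A)) (hl : W.length ≤ n)
    (ι : A → Fin n) (hι : Function.Injective ι) (hW : ∀ B ∈ W, Function.Injective B) :
    W.length * m ≤ matOnes (matB n W ι) := by
  have hcard : W.length * m = Nat.card (Fin W.length × Fin m) := by simp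
  rw [hcard, matOnes]
  apply Nat.card_le_card_of_injective (fun p : Fin W.length × Fin m =>
    (⟨(⟨p.1.val, lt_of_lt_of_le p.1.2 hl⟩, ι (W.get p.1 p.2)),
      (matB_iff _ _ _ _ _).2 ⟨p.1.2, p.2, rfl⟩⟩ :
      {p : Fin n × Fin n // matB n W ι p.1 p.2 = true}))
  rintro ⟨i, c⟩ ⟨i', c'⟩ h
  simp only [Subtype.mk.injEq, Prod.mk.injEq, Fin.mk.injEq] at h
  obtain ⟨h1, h2⟩ := h
  have h1 : i = i' := Fin.ext h1
  subst h1
  have := hW _ (List.get_mem W i) (hι h2)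
  rw [this]

end final

theorem exists_matrix (k t n : ℕ) (hk : 2 * t + 2 ≤ k) (ht : 1 ≤ t) (hn : 1 ≤ n) :
    ∃ M : Fin n → Fin n → Bool, ¬ IsFull (k + 1) M ∧
      n * 2 ^ Nat.choose (invAck n - 6) t ≤ 2 * matOnes M := by
  obtain ⟨N, b, hS, hb, hN, _⟩ := sys_exists t (invAck n - 6) (2 ^ Nat.choose (invAck n - 6) t)
  obtain ⟨N, b, hS, hb, hNn⟩ : ∃ N b, SysB t (2 ^ Nat.choose (invAck n - 6) t)
      (2 ^ Nat.choose (invAck n - 6) t) N b ∧ 1 ≤ b ∧ N ≤ n := by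
    by_cases h6 : 6 ≤ invAck n
    · exact ⟨N, b, hS, hb, hN.trans (growB_final _ t n (by omega))⟩
    · have e : invAck n - 6 = 0 := by omega
      have e2 : Nat.choose 0 t = 0 := Nat.choose_eq_zero_of_lt (by omega)
      rw [e, e2]
      exact ⟨1, 1, sys_one t 1, le_refl _, hn⟩
  set μ := 2 ^ Nat.choose (invAck n - 6) t with hμ
  have hμ1 : 1 ≤ μ := Nat.one_le_two_pow
  obtain ⟨A, _, _, W, cA, lW, iW, nW, bW, _⟩ := hS
  have hbN : N = b := by
    rw [mul_comm] at nW
    exact Nat.eq_of_mul_eq_mul_left (by omega) nW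
  subst hbN
  set q := n / N with hq
  have hqN : q * N ≤ n := Nat.div_mul_le_self n N
  let W' := (List.finRange q).flatMap (tagB q W)
  have hl : W'.length = q * N := by
    simp only [W']
    rw [length_flatMap_const _ _ N (by simp [tagB, lW]), List.length_finRange]
  obtain ⟨ι⟩ : Nonempty ((Fin q × A) ↪ Fin n) := by
    apply Function.Embedding.nonempty_of_card_le
    simp [cA, hqN]
  refine ⟨matB n W' ι, matB_not_full n k t hk W' (by omega) ι ι.injective
    (copies_basic t q W bW), ?_⟩
  have h1 := matB_ones n W' (by omega) ι ι.injective (by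
    intro B hB
    simp only [W', tagB, List.mem_flatMap, List.mem_map] at hB
    obtain ⟨p, _, B0, h0, rfl⟩ := hB
    intro i j h
    simp at h
    exact iW B0 h0 h)
  rw [hl] at h1
  have h2 : n ≤ 2 * (q * N) := by
    have h3 := Nat.div_add_mod n N
    have h4 := Nat.mod_lt n (show 0 < N by omega)
    have h5 : 1 ≤ q := (Nat.one_le_div_iff (by omega)).2 hNn
    rw [← hq] at h3
    nlinarith
  calc n * μ ≤ 2 * (q * N) * μ := Nat.mul_le_mul_right _ h2
    _ = 2 * (q * N * μ) := by ring
    _ ≤ _ := by omega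

/-- For every `k ≥ 4`, with `t = ⌊(k−2)/2⌋`, there is a constant `C_k`
such that for every `n ≥ 1` there is an `n × n` (0,1)-matrix that is not `(k+1)`-full with
at least `n·2^((1/t!)·α(n)^t − C_k·α(n)^(t−1))` `1`-entries. -/
theorem pk_lower_bound :
    ∀ k : ℕ, 4 ≤ k → ∃ C : ℝ, ∀ n : ℕ, 1 ≤ n →
      ∃ M : Fin n → Fin n → Bool, ¬ IsFull (k + 1) M ∧
        (n : ℝ) * (2 : ℝ) ^
          ((1 / (Nat.factorial ((k - 2) / 2) : ℝ)) * (invAck n : ℝ) ^ ((k - 2) / 2)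
            - C * (invAck n : ℝ) ^ ((k - 2) / 2 - 1)) ≤ (matOnes M : ℝ) := by
  intro k hk
  obtain ⟨t, ht⟩ : ∃ t, (k - 2) / 2 = t + 1 := ⟨(k - 2) / 2 - 1, by omega⟩
  rw [ht]
  obtain ⟨C, hC⟩ := real_final t 6
  refine ⟨C, fun n hn => ?_⟩
  obtain ⟨M, hM, hle⟩ := exists_matrix k (t + 1) n (by omega) (by omega) hn
  refine ⟨M, hM, ?_⟩
  have h1 := hC (invAck n) (invAck_pos n)
  have h2 : (n : ℝ) * 2 ^ Nat.choose (invAck n - 6) (t + 1) ≤ 2 * (matOnes M : ℝ) := by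
    exact_mod_cast hle
  rw [show t + 1 - 1 = t by omega]
  have h3 := Real.rpow_le_rpow_of_exponent_le (by norm_num : (1 : ℝ) ≤ 2) h1
  rw [Real.rpow_sub (by norm_num : (0 : ℝ) < 2) (Nat.choose (invAck n - 6) (t + 1) : ℝ) 1,
    Real.rpow_natCast, Real.rpow_one] at h3
  have h4 : (0 : ℝ) ≤ n := Nat.cast_nonneg n
  calc _ ≤ (n : ℝ) * (2 ^ Nat.choose (invAck n - 6) (t + 1) / 2) :=
        mul_le_mul_of_nonneg_left h3 h4
    _ ≤ _ := by linarith
end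

section
/- For every integer s ≥ 2 there exists a constant c_s such that for all integers d ≥ 2, r ≥ 2, and m ≥ k ≥ D_s(d), every (0,1)-matrix with m rows, at least k 1-entries in every column, and containing no doubled (r,s)-formation has at most c_s·r·m·α_d(m)^{s−2} columns; in other words, Δ_{r,s,k}(m) ≤ c_s·r·m·α_d(m)^{s−2}. -/
/-- Number of `1`-entries needed in the `i`-th interval. -/
def needF (ε s i : ℕ) : ℕ := 1 + ε - (if i = 0 then ε else 0) - (if i + 1 = s then ε else 0)

/-- Generalised formation for columns given as finite sets of rows. -/
def FormF (ε s r : ℕ) {ι : Type} (V : Finset ι) (f : ι → Finset ℕ) : Prop :=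
  ∃ T : Finset ι, T ⊆ V ∧ r ≤ T.card ∧ ∃ γ : ℕ → ℕ, Monotone γ ∧ (∀ e, γ e < s) ∧
    ∀ j ∈ T, ∀ i, i < s → needF ε s i ≤ ((f j).filter (fun e => γ e = i)).card

/-- Bound on the number of columns. -/
def BdAt (ε s k r m N : ℕ) : Prop :=
  ∀ (ι : Type) (V : Finset ι) (f : ι → Finset ℕ) (lo : ℕ),
    (∀ j ∈ V, f j ⊆ Finset.Ico lo (lo + m)) → (∀ j ∈ V, k ≤ (f j).card) →
      ¬ FormF ε s r V f → V.card ≤ N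

lemma FormF.mono_V {ε s r : ℕ} {ι : Type} {V W : Finset ι} {f : ι → Finset ℕ}
    (h : FormF ε s r V f) (hVW : V ⊆ W) : FormF ε s r W f := by
  obtain ⟨T, hT, h⟩ := h
  exact ⟨T, hT.trans hVW, h⟩

lemma BdAt.mono {ε s k k' r m N N' : ℕ} (h : BdAt ε s k r m N) (hk : k ≤ k') (hN : N ≤ N') :
    BdAt ε s k' r m N' := by
  intro ι V f lo h1 h2 h3
  exact (h ι V f lo h1 (fun j hj => hk.trans (h2 j hj)) h3).trans hN

lemma BdAt.of_lt {ε s k r m N : ℕ} (h : m < k) : BdAt ε s k r m N := by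
  intro ι V f lo h1 h2 _
  rcases V.eq_empty_or_nonempty with rfl | ⟨j, hj⟩
  · simp
  · have a := Finset.card_le_card (h1 j hj)
    have b := h2 j hj
    simp at a
    omega

lemma prependF {ε s r : ℕ} (hs : 1 ≤ s) {ι : Type} {V : Finset ι} {f g u : ι → Finset ℕ}
    (Q : ℕ → Prop) (hQ : ∀ a b, a ≤ b → Q b → Q a)
    (hg : ∀ j ∈ V, g j ⊆ f j) (hu : ∀ j ∈ V, u j ⊆ f j)
    (hug : ∀ j ∈ V, ∀ a ∈ u j, ∀ b ∈ g j, a < b)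
    (hgQ : ∀ j ∈ V, ∀ a ∈ g j, ¬ Q a) (huQ : ∀ j ∈ V, ∀ a ∈ u j, ¬ Q a)
    (hc : ∀ j ∈ V, ε ≤ (u j).card) (he : ∀ j ∈ V, ∃ e ∈ f j, Q e)
    (h : FormF ε s r V g) : FormF ε (s + 1) r V f := by
  classical
  obtain ⟨T, hT, hr, γ, hγ, hγs, h⟩ := h
  refine ⟨T, hT, hr, fun e => if Q e then 0 else γ e + 1, ?_, ?_, ?_⟩
  · intro a b hab
    have := hQ a b hab
    have := hγ hab
    dsimp only
    split_ifs <;> first | omega | tauto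
  · intro e
    have := hγs e
    dsimp only
    split_ifs <;> omega
  · intro j hj i hi
    have hjV := hT hj
    rcases i with _ | i
    · obtain ⟨e, hef, heQ⟩ := he j hjV
      have h1 : 1 ≤ ((f j).filter (fun e => (if Q e then 0 else γ e + 1) = 0)).card := by
        apply Finset.card_pos.mpr
        exact ⟨e, by simp [hef, heQ]⟩
      refine le_trans ?_ h1
      simp only [needF, if_true]
      omega
    · have hn := h j hj i (by omega)
      by_cases hi0 : i = 0
      · subst hi0
        have hsub : (g j).filter (fun e => γ e = 0) ∪ u j ⊆
            (f j).filter (fun e => (if Q e then 0 else γ e + 1) = 0 + 1) := by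
          intro e hE
          rw [Finset.mem_union, Finset.mem_filter] at hE
          rw [Finset.mem_filter]
          rcases hE with ⟨h1, h2⟩ | h1
          · exact ⟨hg j hjV h1, by simp [hgQ j hjV e h1, h2]⟩
          · refine ⟨hu j hjV h1, ?_⟩
            have : γ e = 0 := by
              by_cases hs1 : s = 1
              · have := hγs e
                omega
              · have : 1 ≤ ((g j).filter (fun e => γ e = 0)).card := by
                  refine le_trans ?_ hn
                  simp only [needF, if_true]
                  rw [if_neg (by omega)]
                  omega
                obtain ⟨y, hy⟩ := Finset.card_pos.mp this
                rw [Finset.mem_filter] at hy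
                have := hγ (hug j hjV e h1 y hy.1).le
                omega
            simp [huQ j hjV e h1, this]
        have hdis : Disjoint ((g j).filter (fun e => γ e = 0)) (u j) := by
          rw [Finset.disjoint_left]
          intro e h1 h2
          rw [Finset.mem_filter] at h1
          exact lt_irrefl _ (hug j hjV e h2 e h1.1)
        have hcard := Finset.card_le_card hsub
        rw [Finset.card_union_of_disjoint hdis] at hcard
        have := hc j hjV
        refine le_trans ?_ hcard
        simp only [needF] at hn ⊢
        split_ifs at hn ⊢ <;> omega
      · have hsub : (g j).filter (fun e => γ e = i) ⊆
            (f j).filter (fun e => (if Q e then 0 else γ e + 1) = i + 1) := by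
          intro e hE
          rw [Finset.mem_filter] at hE ⊢
          exact ⟨hg j hjV hE.1, by simp [hgQ j hjV e hE.1, hE.2]⟩
        refine le_trans ?_ (hn.trans (Finset.card_le_card hsub))
        simp only [needF]
        split_ifs <;> omega

lemma appendF {ε s r : ℕ} (hs : 1 ≤ s) {ι : Type} {V : Finset ι} {f g u : ι → Finset ℕ}
    (Q : ℕ → Prop) (hQ : ∀ a b, a ≤ b → Q a → Q b)
    (hg : ∀ j ∈ V, g j ⊆ f j) (hu : ∀ j ∈ V, u j ⊆ f j)
    (hug : ∀ j ∈ V, ∀ a ∈ u j, ∀ b ∈ g j, b < a)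
    (hgQ : ∀ j ∈ V, ∀ a ∈ g j, ¬ Q a) (huQ : ∀ j ∈ V, ∀ a ∈ u j, ¬ Q a)
    (hc : ∀ j ∈ V, ε ≤ (u j).card) (he : ∀ j ∈ V, ∃ e ∈ f j, Q e)
    (h : FormF ε s r V g) : FormF ε (s + 1) r V f := by
  classical
  obtain ⟨T, hT, hr, γ, hγ, hγs, h⟩ := h
  refine ⟨T, hT, hr, fun e => if Q e then s else γ e, ?_, ?_, ?_⟩
  · intro a b hab
    have := hQ a b hab
    have := hγ hab
    have := hγs a
    dsimp only
    split_ifs <;> first | omega | tauto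
  · intro e
    have := hγs e
    dsimp only
    split_ifs <;> omega
  · intro j hj i hi
    have hjV := hT hj
    by_cases his : i = s
    · subst his
      obtain ⟨e, hef, heQ⟩ := he j hjV
      have h1 : 1 ≤ ((f j).filter (fun e => (if Q e then i else γ e) = i)).card := by
        apply Finset.card_pos.mpr
        exact ⟨e, by simp [hef, heQ]⟩
      refine le_trans ?_ h1
      simp only [needF, if_true]
      omega
    · have hn := h j hj i (by omega)
      by_cases hi0 : i + 1 = s
      · have hsub : (g j).filter (fun e => γ e = i) ∪ u j ⊆
            (f j).filter (fun e => (if Q e then s else γ e) = i) := by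
          intro e hE
          rw [Finset.mem_union, Finset.mem_filter] at hE
          rw [Finset.mem_filter]
          rcases hE with ⟨h1, h2⟩ | h1
          · exact ⟨hg j hjV h1, by simp [hgQ j hjV e h1, h2]⟩
          · refine ⟨hu j hjV h1, ?_⟩
            have : γ e = i := by
              have := hγs e
              by_cases hs1 : s = 1
              · omega
              · have : 1 ≤ ((g j).filter (fun e => γ e = i)).card := by
                  refine le_trans ?_ hn
                  simp only [needF]
                  rw [if_neg (by omega : ¬ i = 0)]
                  split_ifs <;> omega
                obtain ⟨y, hy⟩ := Finset.card_pos.mp this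
                rw [Finset.mem_filter] at hy
                have := hγ (hug j hjV e h1 y hy.1).le
                omega
            simp [huQ j hjV e h1, this]
        have hdis : Disjoint ((g j).filter (fun e => γ e = i)) (u j) := by
          rw [Finset.disjoint_left]
          intro e h1 h2
          rw [Finset.mem_filter] at h1
          exact lt_irrefl _ (hug j hjV e h2 e h1.1)
        have hcard := Finset.card_le_card hsub
        rw [Finset.card_union_of_disjoint hdis] at hcard
        have := hc j hjV
        refine le_trans ?_ hcard
        simp only [needF] at hn ⊢
        split_ifs at hn ⊢ <;> omega
      · have hsub : (g j).filter (fun e => γ e = i) ⊆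
            (f j).filter (fun e => (if Q e then s else γ e) = i) := by
          intro e hE
          rw [Finset.mem_filter] at hE ⊢
          exact ⟨hg j hjV hE.1, by simp [hgQ j hjV e hE.1, hE.2]⟩
        refine le_trans ?_ (hn.trans (Finset.card_le_card hsub))
        simp only [needF]
        split_ifs <;> omega

/-- Remove the top `ε` elements. -/
lemma split_top (ε : ℕ) : ∀ (k : ℕ) (h : Finset ℕ), k + ε ≤ h.card →
    ∃ g u : Finset ℕ, g ⊆ h ∧ u ⊆ h ∧ k ≤ g.card ∧ ε ≤ u.card ∧ ∀ a ∈ u, ∀ b ∈ g, b < a := by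
  classical
  induction ε with
  | zero =>
    intro k h hk
    exact ⟨h, ∅, subset_rfl, by simp, hk, by simp, by simp⟩
  | succ ε ih =>
    intro k h hk
    obtain ⟨g, u, hg, hu, hgc, huc, hlt⟩ := ih (k + 1) h (by omega)
    have hne : g.Nonempty := Finset.card_pos.mp (by omega)
    have hnu : g.max' hne ∉ u := fun hm => lt_irrefl _ (hlt _ hm _ (g.max'_mem hne))
    refine ⟨g.erase (g.max' hne), insert (g.max' hne) u, (Finset.erase_subset _ _).trans hg,
      Finset.insert_subset (hg (g.max'_mem hne)) hu, ?_, ?_, ?_⟩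
    · rw [Finset.card_erase_of_mem (g.max'_mem hne)]
      omega
    · rw [Finset.card_insert_of_notMem hnu]
      omega
    · intro a ha b hb
      rw [Finset.mem_insert] at ha
      rcases ha with rfl | ha
      · exact Finset.lt_max'_of_mem_erase_max' g hne hb
      · exact hlt a ha b (Finset.mem_of_mem_erase hb)

/-- Remove the bottom `ε` elements. -/
lemma split_bot (ε : ℕ) : ∀ (k : ℕ) (h : Finset ℕ), k + ε ≤ h.card →
    ∃ g u : Finset ℕ, g ⊆ h ∧ u ⊆ h ∧ k ≤ g.card ∧ ε ≤ u.card ∧ ∀ a ∈ u, ∀ b ∈ g, a < b := by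
  intro k h hk
  obtain ⟨g, u, hg, hu, hgc, huc, hlt⟩ := split_top k ε h (by omega)
  exact ⟨u, g, hu, hg, huc, hgc, fun a ha b hb => hlt b hb a ha⟩

lemma contract_all {ε s r : ℕ} {ι : Type} {V : Finset ι} {f : ι → Finset ℕ} {β : ℕ → ℕ}
    (hβ : Monotone β) (h : FormF ε s r V (fun j => (f j).image β)) : FormF ε s r V f := by
  obtain ⟨T, hT, hr, γ, hγ, hγs, h⟩ := h
  refine ⟨T, hT, hr, fun e => γ (β e), hγ.comp hβ, fun e => hγs _, ?_⟩
  intro j hj i hi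
  refine (h j hj i hi).trans ?_
  rw [Finset.filter_image]
  exact Finset.card_image_le

lemma contract_heavy {ε s r : ℕ} {ι : Type} {V : Finset ι} {f : ι → Finset ℕ}
    {β : ℕ → ℕ} {H : ι → Finset ℕ} (hβ : Monotone β)
    (hH : ∀ j ∈ V, ∀ i ∈ H j, i ∈ (f j).image β ∧ ((∃ e ∈ f j, β e < i) → (∃ e ∈ f j, i < β e) →
      1 + ε ≤ ((f j).filter (fun e => β e = i)).card))
    (h : FormF 0 s r V H) : FormF ε s r V f := by
  obtain ⟨T, hT, hr, γ, hγ, hγs, h⟩ := h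
  refine ⟨T, hT, hr, fun e => γ (β e), hγ.comp hβ, fun e => hγs _, ?_⟩
  intro j hj i hi
  have key : ∀ i < s, ∃ k ∈ H j, γ k = i := by
    intro i hi
    have h1 : 1 ≤ ((H j).filter (fun e => γ e = i)).card := by
      refine le_trans ?_ (h j hj i hi)
      simp [needF]
    obtain ⟨k, hk⟩ := Finset.card_pos.mp h1
    rw [Finset.mem_filter] at hk
    exact ⟨k, hk⟩
  have key2 : ∀ i < s, ∃ e ∈ f j, β e ∈ H j ∧ γ (β e) = i := by
    intro i hi
    obtain ⟨k, hk, hki⟩ := key i hi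
    obtain ⟨e, he, rfl⟩ := Finset.mem_image.mp (hH j (hT hj) k hk).1
    exact ⟨e, he, hk, hki⟩
  obtain ⟨e, hef, heH, hei⟩ := key2 i hi
  by_cases hend : i = 0 ∨ i + 1 = s
  · have h1 : 1 ≤ ((f j).filter (fun e => γ (β e) = i)).card :=
      Finset.card_pos.mpr ⟨e, by simp [hef, hei]⟩
    refine le_trans ?_ h1
    simp only [needF]
    split_ifs <;> omega
  · push Not at hend
    obtain ⟨e0, he0, _, he0i⟩ := key2 0 (by omega)
    obtain ⟨e1, he1, _, he1i⟩ := key2 (s - 1) (by omega)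
    have h0 : β e0 < β e := by
      by_contra hc
      have := hγ (not_lt.mp hc)
      omega
    have h1 : β e < β e1 := by
      by_contra hc
      have := hγ (not_lt.mp hc)
      omega
    have h2 := (hH j (hT hj) _ heH).2 ⟨e0, he0, h0⟩ ⟨e1, he1, h1⟩
    refine le_trans (le_trans ?_ h2) (Finset.card_le_card ?_)
    · simp only [needF]
      omega
    · intro x hx
      rw [Finset.mem_filter] at hx ⊢
      exact ⟨hx.1, by show γ (β x) = i; rw [hx.2, hei]⟩

lemma sum_widths (t m b : ℕ) : ∑ i ∈ Finset.range b, min t (m - i * t) ≤ min m (b * t) := by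
  induction b with
  | zero => simp
  | succ b ih =>
    rw [Finset.sum_range_succ, Nat.succ_mul]
    omega

/-- The counting argument for one column. -/
lemma column_count {ε k k1 k2 k3 k4 : ℕ} (f : Finset ℕ) (β : ℕ → ℕ)
    (hk3 : 3 ≤ k3) (hk34 : k3 ≤ k4) (hk2 : 1 ≤ k2 + ε)
    (hk : 2 * (k1 + ε - 1) + (k3 - 3) * (k2 + 2 * ε - 1) + ε * (k4 - k3) + 1 ≤ k)
    (hf : k ≤ f.card)
    (hloc : ∀ i, ¬ ∀ e ∈ f, β e = i)
    (hS : ∀ i, (∃ e ∈ f, i < β e) → (f.filter (fun e => β e = i)).card < k1 + ε)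
    (hE : ∀ i, (∃ e ∈ f, β e < i) → (f.filter (fun e => β e = i)).card < k1 + ε)
    (hM : ∀ i, (∃ e ∈ f, β e < i) → (∃ e ∈ f, i < β e) →
      (f.filter (fun e => β e = i)).card < k2 + 2 * ε)
    (h3 : ((f.image β).filter (fun i => (∃ e ∈ f, β e < i) → (∃ e ∈ f, i < β e) →
      1 + ε ≤ (f.filter (fun e => β e = i)).card)).card < k3)
    (h4 : (f.image β).card < k4) : False := by
  classical
  have hfne : f.Nonempty := Finset.card_pos.mp (by omega)
  have hne : (f.image β).Nonempty := hfne.image β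
  set NB := f.image β with hNB
  set a := NB.min' hne with ha
  set z := NB.max' hne with hz
  have haN : a ∈ NB := NB.min'_mem hne
  have hzN : z ∈ NB := NB.max'_mem hne
  obtain ⟨ea, hea, hea'⟩ := Finset.mem_image.mp haN
  obtain ⟨ez, hez, hez'⟩ := Finset.mem_image.mp hzN
  have hlow : ∀ e ∈ f, a ≤ β e := fun e he => NB.min'_le _ (Finset.mem_image_of_mem β he)
  have hhigh : ∀ e ∈ f, β e ≤ z := fun e he => NB.le_max' _ (Finset.mem_image_of_mem β he)
  have haz : a < z := by
    by_contra hc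
    apply hloc a
    intro e he
    have := hlow e he
    have := hhigh e he
    omega
  set rest := (NB.erase a).erase z with hrest
  have hzE : z ∈ NB.erase a := Finset.mem_erase.mpr ⟨by omega, hzN⟩
  have hrestmem : ∀ i ∈ rest, (∃ e ∈ f, β e < i) ∧ (∃ e ∈ f, i < β e) := by
    intro i hi
    rw [hrest, Finset.mem_erase, Finset.mem_erase] at hi
    have h1 : a ≤ i := NB.min'_le _ hi.2.2
    have h2 : i ≤ z := NB.le_max' _ hi.2.2
    exact ⟨⟨ea, hea, by omega⟩, ⟨ez, hez, by omega⟩⟩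
  set c : ℕ → ℕ := fun i => (f.filter (fun e => β e = i)).card with hc
  have hsum : f.card = ∑ i ∈ NB, c i :=
    Finset.card_eq_sum_card_image β f
  have hsum2 : ∑ i ∈ NB, c i = c a + (c z + ∑ i ∈ rest, c i) := by
    rw [← Finset.add_sum_erase NB c haN, ← Finset.add_sum_erase _ c hzE]
  have hca : c a < k1 + ε := hS a ⟨ez, hez, by omega⟩
  have hcz : c z < k1 + ε := hE z ⟨ea, hea, by omega⟩
  set Hm := rest.filter (fun i => 1 + ε ≤ c i) with hHm
  set Lm := rest.filter (fun i => ¬ 1 + ε ≤ c i) with hLm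
  have hsum3 : ∑ i ∈ rest, c i = ∑ i ∈ Hm, c i + ∑ i ∈ Lm, c i :=
    (Finset.sum_filter_add_sum_filter_not rest _ _).symm
  have hHs : ∑ i ∈ Hm, c i ≤ Hm.card * (k2 + 2 * ε - 1) := by
    rw [← smul_eq_mul]
    apply Finset.sum_le_card_nsmul
    intro i hi
    have hi' := hrestmem i (Finset.mem_filter.mp hi).1
    have := hM i hi'.1 hi'.2
    simp only [hc]
    omega
  have hLs : ∑ i ∈ Lm, c i ≤ Lm.card * ε := by
    rw [← smul_eq_mul]
    apply Finset.sum_le_card_nsmul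
    intro i hi
    have := (Finset.mem_filter.mp hi).2
    omega
  have hcards : Hm.card + Lm.card = rest.card := Finset.card_filter_add_card_filter_not _
  have hrc : rest.card + 2 = NB.card := by
    have h1 := Finset.card_erase_add_one haN
    have h2 := Finset.card_erase_add_one hzE
    rw [hrest]
    omega
  have hH3 : Hm.card + 2 < k3 := by
    refine lt_of_le_of_lt ?_ h3
    have hza : z ∉ Hm := by
      intro hm
      have := (Finset.mem_filter.mp hm).1
      simp [hrest] at this
    have haa : a ∉ insert z Hm := by
      intro hm
      rw [Finset.mem_insert] at hm
      rcases hm with hm | hm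
      · omega
      · have := (Finset.mem_filter.mp hm).1
        simp [hrest] at this
    rw [← Nat.add_assoc Hm.card 1 1, ← Finset.card_insert_of_notMem hza,
      ← Finset.card_insert_of_notMem haa]
    apply Finset.card_le_card
    intro i hi
    rw [Finset.mem_insert, Finset.mem_insert] at hi
    rw [Finset.mem_filter]
    rcases hi with rfl | rfl | hi
    · refine ⟨haN, ?_⟩
      rintro ⟨e, he, hlt⟩
      have := hlow e he
      omega
    · refine ⟨hzN, ?_⟩
      rintro _ ⟨e, he, hlt⟩
      have := hhigh e he
      omega
    · rw [hHm, Finset.mem_filter] at hi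
      refine ⟨?_, fun _ _ => hi.2⟩
      exact Finset.mem_of_mem_erase (Finset.mem_of_mem_erase hi.1)
  obtain ⟨x, hx⟩ : ∃ x, k3 - 3 = Hm.card + x := ⟨k3 - 3 - Hm.card, by omega⟩
  obtain ⟨q, hq⟩ : ∃ q, k2 + 2 * ε - 1 = ε + q := ⟨k2 + ε - 1, by omega⟩
  have hL4 : Lm.card ≤ (k4 - k3) + x := by omega
  have hL5 : Lm.card * ε ≤ ((k4 - k3) + x) * ε := Nat.mul_le_mul_right _ hL4
  rw [hx, hq] at hk
  rw [hq] at hHs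
  have h6 : (Hm.card + x) * (ε + q) = Hm.card * (ε + q) + x * ε + x * q := by ring
  have h7 : ((k4 - k3) + x) * ε = ε * (k4 - k3) + x * ε := by ring
  have h8 : 0 ≤ x * q := Nat.zero_le _
  omega

lemma step_bound {ε s k k1 k2 k3 k4 r m b t ψ ψ1 ψ2 X3 X4 : ℕ} (hs : 1 ≤ s) (ht : 1 ≤ t)
    (hbt : m ≤ b * t)
    (hk3 : 3 ≤ k3) (hk34 : k3 ≤ k4) (hk2 : 1 ≤ k2 + ε) (hk1 : 1 ≤ k1)
    (hk : 2 * (k1 + ε - 1) + (k3 - 3) * (k2 + 2 * ε - 1) + ε * (k4 - k3) + 1 ≤ k)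
    (h0 : ∀ m' ≤ t, BdAt ε (s + 2) k r m' (ψ * m'))
    (h1 : ∀ m' ≤ t, BdAt ε (s + 1) k1 r m' (ψ1 * m'))
    (h2 : ∀ m', 1 ≤ m' → m' ≤ t → BdAt ε s k2 r m' (ψ2 * m'))
    (h3 : BdAt 0 (s + 2) k3 r b X3)
    (h4 : BdAt ε (s + 2) k4 r b X4) :
    BdAt ε (s + 2) k r m (ψ * m + 2 * (ψ1 * m) + ψ2 * m + X3 + X4) := by
  classical
  intro ι V f lo hrow hcol hform
  set β : ℕ → ℕ := fun e => (e - lo) / t with hβdef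
  have hβ : Monotone β := by
    intro x y hxy
    exact Nat.div_le_div_right (by omega)
  set w : ℕ → ℕ := fun i => min t (m - i * t) with hw
  have hwt : ∀ i, w i ≤ t := fun i => min_le_left _ _
  have hwsum : ∑ i ∈ Finset.range b, w i ≤ m :=
    (sum_widths t m b).trans (min_le_left _ _)
  have hblock : ∀ j ∈ V, ∀ e ∈ f j, ∀ i, β e = i →
      i < b ∧ lo + i * t ≤ e ∧ e < lo + i * t + w i := by
    intro j hj e he i hi
    have := hrow j hj he
    rw [Finset.mem_Ico] at this
    have hd : (e - lo) / t = i := hi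
    have hd1 := Nat.div_mul_le_self (e - lo) t
    have hd2 := Nat.lt_div_mul_add (a := e - lo) (b := t) (by omega)
    rw [hd] at hd1 hd2
    refine ⟨?_, by omega, ?_⟩
    · by_contra hc
      have := Nat.mul_le_mul_right t (not_lt.mp hc)
      omega
    · simp only [hw]
      omega
  have hblockIco : ∀ j ∈ V, ∀ i, ∀ g : Finset ℕ, g ⊆ (f j).filter (fun e => β e = i) →
      g ⊆ Finset.Ico (lo + i * t) (lo + i * t + w i) := by
    intro j hj i g hg e he
    have := hg he
    rw [Finset.mem_filter] at this
    have := hblock j hj e this.1 i this.2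
    rw [Finset.mem_Ico]
    exact this.2
  set L : ℕ → Finset ι := fun i => V.filter (fun j => ∀ e ∈ f j, β e = i) with hL
  set S : ℕ → Finset ι := fun i => V.filter (fun j => (∃ e ∈ f j, i < β e) ∧
    k1 + ε ≤ ((f j).filter (fun e => β e = i)).card) with hS
  set E : ℕ → Finset ι := fun i => V.filter (fun j => (∃ e ∈ f j, β e < i) ∧
    k1 + ε ≤ ((f j).filter (fun e => β e = i)).card) with hE
  set M : ℕ → Finset ι := fun i => V.filter (fun j => (∃ e ∈ f j, β e < i) ∧
    (∃ e ∈ f j, i < β e) ∧ k2 + 2 * ε ≤ ((f j).filter (fun e => β e = i)).card) with hM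
  set H : ι → Finset ℕ := fun j => ((f j).image β).filter (fun i => (∃ e ∈ f j, β e < i) →
    (∃ e ∈ f j, i < β e) → 1 + ε ≤ ((f j).filter (fun e => β e = i)).card) with hH
  set W3 : Finset ι := V.filter (fun j => k3 ≤ (H j).card) with hW3
  set W4 : Finset ι := V.filter (fun j => k4 ≤ ((f j).image β).card) with hW4
  have hLb : ∀ i, (L i).card ≤ ψ * w i := by
    intro i
    refine h0 (w i) (hwt i) ι (L i) f (lo + i * t) ?_ ?_ ?_
    · intro j hj
      have hj' := Finset.mem_filter.mp hj
      apply hblockIco j hj'.1 i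
      intro e he
      rw [Finset.mem_filter]
      exact ⟨he, hj'.2 e he⟩
    · intro j hj
      exact hcol j (Finset.mem_filter.mp hj).1
    · intro hf
      exact hform (hf.mono_V (Finset.filter_subset _ _))
  have hSb : ∀ i, (S i).card ≤ ψ1 * w i := by
    intro i
    have hex : ∀ j, ∃ gu : Finset ℕ × Finset ℕ, j ∈ S i →
        gu.1 ⊆ (f j).filter (fun e => β e = i) ∧ gu.2 ⊆ (f j).filter (fun e => β e = i) ∧
        k1 ≤ gu.1.card ∧ ε ≤ gu.2.card ∧ ∀ a ∈ gu.2, ∀ b ∈ gu.1, b < a := by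
      intro j
      by_cases hj : j ∈ S i
      · obtain ⟨g, u, h⟩ := split_top ε k1 _ (Finset.mem_filter.mp hj).2.2
        exact ⟨(g, u), fun _ => h⟩
      · exact ⟨(∅, ∅), fun h => absurd h hj⟩
    choose gu hgu using hex
    refine h1 (w i) (hwt i) ι (S i) (fun j => (gu j).1) (lo + i * t) ?_ ?_ ?_
    · intro j hj
      exact hblockIco j (Finset.mem_filter.mp hj).1 i _ (hgu j hj).1
    · intro j hj
      exact (hgu j hj).2.2.1
    · intro hf
      apply hform
      refine FormF.mono_V (V := S i) ?_ (Finset.filter_subset _ _)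
      refine appendF (s := s + 1) (g := fun j => (gu j).1) (u := fun j => (gu j).2)
        (by omega) (fun e => i < β e) ?_ ?_ ?_ ?_ ?_ ?_ ?_ ?_ hf
      · intro a b hab h
        exact lt_of_lt_of_le h (hβ hab)
      · intro j hj
        exact (hgu j hj).1.trans (Finset.filter_subset _ _)
      · intro j hj
        exact (hgu j hj).2.1.trans (Finset.filter_subset _ _)
      · intro j hj
        exact (hgu j hj).2.2.2.2
      · intro j hj a ha
        have := (Finset.mem_filter.mp ((hgu j hj).1 ha)).2
        omega
      · intro j hj a ha
        have := (Finset.mem_filter.mp ((hgu j hj).2.1 ha)).2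
        omega
      · intro j hj
        exact (hgu j hj).2.2.2.1
      · intro j hj
        exact (Finset.mem_filter.mp hj).2.1
  have hEb : ∀ i, (E i).card ≤ ψ1 * w i := by
    intro i
    have hex : ∀ j, ∃ gu : Finset ℕ × Finset ℕ, j ∈ E i →
        gu.1 ⊆ (f j).filter (fun e => β e = i) ∧ gu.2 ⊆ (f j).filter (fun e => β e = i) ∧
        k1 ≤ gu.1.card ∧ ε ≤ gu.2.card ∧ ∀ a ∈ gu.2, ∀ b ∈ gu.1, a < b := by
      intro j
      by_cases hj : j ∈ E i
      · obtain ⟨g, u, h⟩ := split_bot ε k1 _ (Finset.mem_filter.mp hj).2.2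
        exact ⟨(g, u), fun _ => h⟩
      · exact ⟨(∅, ∅), fun h => absurd h hj⟩
    choose gu hgu using hex
    refine h1 (w i) (hwt i) ι (E i) (fun j => (gu j).1) (lo + i * t) ?_ ?_ ?_
    · intro j hj
      exact hblockIco j (Finset.mem_filter.mp hj).1 i _ (hgu j hj).1
    · intro j hj
      exact (hgu j hj).2.2.1
    · intro hf
      apply hform
      refine FormF.mono_V (V := E i) ?_ (Finset.filter_subset _ _)
      refine prependF (s := s + 1) (g := fun j => (gu j).1) (u := fun j => (gu j).2)
        (by omega) (fun e => β e < i) ?_ ?_ ?_ ?_ ?_ ?_ ?_ ?_ hf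
      · intro a b hab h
        exact lt_of_le_of_lt (hβ hab) h
      · intro j hj
        exact (hgu j hj).1.trans (Finset.filter_subset _ _)
      · intro j hj
        exact (hgu j hj).2.1.trans (Finset.filter_subset _ _)
      · intro j hj
        exact (hgu j hj).2.2.2.2
      · intro j hj a ha
        have := (Finset.mem_filter.mp ((hgu j hj).1 ha)).2
        omega
      · intro j hj a ha
        have := (Finset.mem_filter.mp ((hgu j hj).2.1 ha)).2
        omega
      · intro j hj
        exact (hgu j hj).2.2.2.1
      · intro j hj
        exact (Finset.mem_filter.mp hj).2.1
  have hMb : ∀ i, (M i).card ≤ ψ2 * w i := by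
    intro i
    rcases (M i).eq_empty_or_nonempty with hemp | ⟨j0, hj0⟩
    · rw [hemp]
      simp
    have hw1 : 1 ≤ w i := by
      have hj' := Finset.mem_filter.mp hj0
      have hne : 0 < ((f j0).filter (fun e => β e = i)).card := by
        have := hj'.2.2.2
        omega
      obtain ⟨e, he⟩ := Finset.card_pos.mp hne
      have he' := Finset.mem_filter.mp he
      have := hblock j0 hj'.1 e he'.1 i he'.2
      omega
    have hex : ∀ j, ∃ gu : Finset ℕ × Finset ℕ × Finset ℕ × Finset ℕ, j ∈ M i →
        (gu.1 ⊆ (f j).filter (fun e => β e = i) ∧ gu.2.1 ⊆ (f j).filter (fun e => β e = i) ∧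
        k2 + ε ≤ gu.1.card ∧ ε ≤ gu.2.1.card ∧ ∀ a ∈ gu.2.1, ∀ b ∈ gu.1, b < a) ∧
        (gu.2.2.1 ⊆ gu.1 ∧ gu.2.2.2 ⊆ gu.1 ∧
        k2 ≤ gu.2.2.1.card ∧ ε ≤ gu.2.2.2.card ∧ ∀ a ∈ gu.2.2.2, ∀ b ∈ gu.2.2.1, a < b) := by
      intro j
      by_cases hj : j ∈ M i
      · obtain ⟨g, u, h⟩ := split_top ε (k2 + ε) ((f j).filter (fun e => β e = i)) (by
          have := (Finset.mem_filter.mp hj).2.2.2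
          omega)
        obtain ⟨g', u', h'⟩ := split_bot ε k2 g h.2.2.1
        exact ⟨(g, u, g', u'), fun _ => ⟨h, h'⟩⟩
      · exact ⟨(∅, ∅, ∅, ∅), fun h => absurd h hj⟩
    choose gu hgu using hex
    refine h2 (w i) hw1 (hwt i) ι (M i) (fun j => (gu j).2.2.1) (lo + i * t) ?_ ?_ ?_
    · intro j hj
      exact hblockIco j (Finset.mem_filter.mp hj).1 i _ ((hgu j hj).2.1.trans (hgu j hj).1.1)
    · intro j hj
      exact (hgu j hj).2.2.2.1
    · intro hf
      apply hform
      refine FormF.mono_V (V := M i) ?_ (Finset.filter_subset _ _)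
      have hmid : FormF ε (s + 1) r (M i)
          (fun j => (gu j).1 ∪ (f j).filter (fun e => β e < i)) := by
        refine prependF (s := s) (g := fun j => (gu j).2.2.1) (u := fun j => (gu j).2.2.2)
          hs (fun e => β e < i) ?_ ?_ ?_ ?_ ?_ ?_ ?_ ?_ hf
        · intro a b hab h
          exact lt_of_le_of_lt (hβ hab) h
        · intro j hj
          exact (hgu j hj).2.1.trans Finset.subset_union_left
        · intro j hj
          exact (hgu j hj).2.2.1.trans Finset.subset_union_left
        · intro j hj
          exact (hgu j hj).2.2.2.2.2
        · intro j hj a ha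
          have := (Finset.mem_filter.mp ((hgu j hj).1.1 ((hgu j hj).2.1 ha))).2
          omega
        · intro j hj a ha
          have := (Finset.mem_filter.mp ((hgu j hj).1.1 ((hgu j hj).2.2.1 ha))).2
          omega
        · intro j hj
          exact (hgu j hj).2.2.2.2.1
        · intro j hj
          obtain ⟨e, he, hei⟩ := (Finset.mem_filter.mp hj).2.1
          exact ⟨e, Finset.mem_union_right _ (Finset.mem_filter.mpr ⟨he, hei⟩), hei⟩
      refine appendF (s := s + 1) (u := fun j => (gu j).2.1)
        (by omega) (fun e => i < β e) ?_ ?_ ?_ ?_ ?_ ?_ ?_ ?_ hmid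
      · intro a b hab h
        exact lt_of_lt_of_le h (hβ hab)
      · intro j hj
        exact Finset.union_subset ((hgu j hj).1.1.trans (Finset.filter_subset _ _))
          (Finset.filter_subset _ _)
      · intro j hj
        exact (hgu j hj).1.2.1.trans (Finset.filter_subset _ _)
      · intro j hj a ha b hb
        rcases Finset.mem_union.mp hb with hb | hb
        · exact (hgu j hj).1.2.2.2.2 a ha b hb
        · have h5 := (Finset.mem_filter.mp ((hgu j hj).1.2.1 ha)).2
          have h6 := (Finset.mem_filter.mp hb).2
          by_contra hc
          have := hβ (not_lt.mp hc)
          omega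
      · intro j hj a ha
        rcases Finset.mem_union.mp ha with ha | ha
        · have := (Finset.mem_filter.mp ((hgu j hj).1.1 ha)).2
          omega
        · have := (Finset.mem_filter.mp ha).2
          omega
      · intro j hj a ha
        have := (Finset.mem_filter.mp ((hgu j hj).1.2.1 ha)).2
        omega
      · intro j hj
        exact (hgu j hj).1.2.2.2.1
      · intro j hj
        exact (Finset.mem_filter.mp hj).2.2.1
  have himg : ∀ j ∈ V, (f j).image β ⊆ Finset.Ico 0 (0 + b) := by
    intro j hj i hi
    obtain ⟨e, he, hei⟩ := Finset.mem_image.mp hi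
    have := (hblock j hj e he i hei).1
    simp only [Finset.mem_Ico]
    omega
  have hW3b : W3.card ≤ X3 := by
    refine h3 ι W3 H 0 ?_ ?_ ?_
    · intro j hj
      exact (Finset.filter_subset _ _).trans (himg j (Finset.mem_filter.mp hj).1)
    · intro j hj
      exact (Finset.mem_filter.mp hj).2
    · intro hf
      apply hform
      refine FormF.mono_V (V := W3) ?_ (Finset.filter_subset _ _)
      refine contract_heavy hβ ?_ hf
      intro j hj i hi
      exact Finset.mem_filter.mp hi
  have hW4b : W4.card ≤ X4 := by
    refine h4 ι W4 (fun j => (f j).image β) 0 ?_ ?_ ?_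
    · intro j hj
      exact himg j (Finset.mem_filter.mp hj).1
    · intro j hj
      exact (Finset.mem_filter.mp hj).2
    · intro hf
      apply hform
      exact FormF.mono_V (V := W4) (contract_all hβ hf) (Finset.filter_subset _ _)
  have hsum : ∀ (A : ℕ → Finset ι) (ψ : ℕ), (∀ i, (A i).card ≤ ψ * w i) →
      ((Finset.range b).biUnion A).card ≤ ψ * m := by
    intro A ψ hA
    calc ((Finset.range b).biUnion A).card ≤ ∑ i ∈ Finset.range b, (A i).card :=
          Finset.card_biUnion_le
      _ ≤ ∑ i ∈ Finset.range b, ψ * w i := Finset.sum_le_sum (fun i _ => hA i)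
      _ = ψ * ∑ i ∈ Finset.range b, w i := by rw [Finset.mul_sum]
      _ ≤ ψ * m := Nat.mul_le_mul_left _ hwsum
  have hcover : V ⊆ (Finset.range b).biUnion L ∪ ((Finset.range b).biUnion S ∪
      ((Finset.range b).biUnion E ∪ ((Finset.range b).biUnion M ∪ (W3 ∪ W4)))) := by
    intro j hj
    by_contra hnot
    simp only [Finset.mem_union, Finset.mem_biUnion, not_or, not_exists, not_and,
      Finset.mem_range] at hnot
    obtain ⟨nL, nS, nE, nM, n3, n4⟩ := hnot
    have hpos : 0 < (f j).card := by
      have := hcol j hj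
      omega
    have hbi : ∀ i, 0 < ((f j).filter (fun e => β e = i)).card → i < b := by
      intro i hi
      obtain ⟨e, he⟩ := Finset.card_pos.mp hi
      have he' := Finset.mem_filter.mp he
      exact (hblock j hj e he'.1 i he'.2).1
    have hmem : ∀ e ∈ f j, β e < b := fun e he => (hblock j hj e he _ rfl).1
    obtain ⟨ej, hej⟩ := Finset.card_pos.mp hpos
    refine column_count (k := k) (k1 := k1) (k2 := k2) (k3 := k3) (k4 := k4) (ε := ε) (f j) β
      hk3 hk34 hk2 hk (hcol j hj) ?_ ?_ ?_ ?_ ?_ ?_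
    · intro i hi
      have := hmem ej hej
      rw [hi ej hej] at this
      exact nL i this (Finset.mem_filter.mpr ⟨hj, hi⟩)
    · intro i hi
      by_contra hc
      have hib : i < b := by
        obtain ⟨e, he, h⟩ := hi
        have := hmem e he
        omega
      exact nS i hib (Finset.mem_filter.mpr ⟨hj, hi, not_lt.mp hc⟩)
    · intro i hi
      by_contra hc
      have hib : i < b := hbi i (by omega)
      exact nE i hib (Finset.mem_filter.mpr ⟨hj, hi, not_lt.mp hc⟩)
    · intro i hi hi'
      by_contra hc
      have hib : i < b := hbi i (by omega)
      exact nM i hib (Finset.mem_filter.mpr ⟨hj, hi, hi', not_lt.mp hc⟩)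
    · by_contra hc
      refine n3 (Finset.mem_filter.mpr ⟨hj, ?_⟩)
      have := not_lt.mp hc
      convert this
    · by_contra hc
      exact n4 (Finset.mem_filter.mpr ⟨hj, not_lt.mp hc⟩)
  have hc1 := Finset.card_le_card hcover
  have u1 := Finset.card_union_le ((Finset.range b).biUnion L) ((Finset.range b).biUnion S ∪
      ((Finset.range b).biUnion E ∪ ((Finset.range b).biUnion M ∪ (W3 ∪ W4))))
  have u2 := Finset.card_union_le ((Finset.range b).biUnion S)
      ((Finset.range b).biUnion E ∪ ((Finset.range b).biUnion M ∪ (W3 ∪ W4)))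
  have u3 := Finset.card_union_le ((Finset.range b).biUnion E)
      ((Finset.range b).biUnion M ∪ (W3 ∪ W4))
  have u4 := Finset.card_union_le ((Finset.range b).biUnion M) (W3 ∪ W4)
  have u5 := Finset.card_union_le W3 W4
  have s1 := hsum L ψ hLb
  have s2 := hsum S ψ1 hSb
  have s3 := hsum E ψ1 hEb
  have s4 := hsum M ψ2 hMb
  omega

lemma iterCount_fuel {f : ℕ → ℕ} (hf : ∀ x, 2 ≤ x → f x < x) :
    ∀ n1 n2 m, m ≤ n1 + 1 → m ≤ n2 + 1 → iterCount f n1 m = iterCount f n2 m := by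
  intro n1
  induction n1 with
  | zero =>
    intro n2 m h1 h2
    cases n2 with
    | zero => rfl
    | succ n2 => simp [iterCount, show m ≤ 1 by omega]
  | succ n1 ih =>
    intro n2 m h1 h2
    by_cases hm : m ≤ 1
    · cases n2 with
      | zero => simp [iterCount, hm]
      | succ n2 => simp [iterCount, hm]
    · have := hf m (by omega)
      cases n2 with
      | zero => omega
      | succ n2 =>
        simp only [iterCount, hm, if_false]
        rw [ih n2 (f m) (by omega) (by omega)]

lemma al_basic : ∀ e : ℕ, (∀ m, 2 ≤ m → alphaHier (e + 1) m < m) ∧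
    (∀ m, 2 ≤ m → 1 ≤ alphaHier (e + 1) m) ∧ Monotone (alphaHier (e + 1)) := by
  intro e
  induction e with
  | zero =>
    refine ⟨?_, ?_, ?_⟩
    · intro m hm
      simp only [alphaHier]
      omega
    · intro m hm
      simp only [alphaHier]
      omega
    · intro a b hab
      simp only [alphaHier]
      omega
  | succ e ih =>
    obtain ⟨hlt, hpos, hmono⟩ := ih
    have hrec : ∀ m, 2 ≤ m → alphaHier (e + 1 + 1) m =
        1 + alphaHier (e + 1 + 1) (alphaHier (e + 1) m) := by
      intro m hm
      obtain ⟨m, rfl⟩ : ∃ n, m = n + 1 := ⟨m - 1, by omega⟩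
      have h1 := hlt (m + 1) hm
      show iterCount (alphaHier (e + 1)) (m + 1) (m + 1) = 1 + iterCount (alphaHier (e + 1)) _ _
      rw [iterCount, if_neg (by omega)]
      rw [iterCount_fuel hlt m (alphaHier (e + 1) (m + 1)) _ (by omega) (by omega)]
    have hsmall : ∀ m, m ≤ 1 → alphaHier (e + 1 + 1) m = 0 := by
      intro m hm
      show iterCount (alphaHier (e + 1)) m m = 0
      cases m with
      | zero => rfl
      | succ m => simp [iterCount, hm]
    have hlt' : ∀ m, 1 ≤ m → alphaHier (e + 1 + 1) m < m := by
      intro m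
      induction m using Nat.strong_induction_on with
      | _ m ihm =>
        intro hm
        by_cases h : 2 ≤ m
        · have h1 := hlt m h
          have h2 := ihm _ h1 (hpos m h)
          rw [hrec m h]
          omega
        · rw [hsmall m (by omega)]
          omega
    refine ⟨fun m hm => hlt' m (by omega), fun m hm => by rw [hrec m hm]; omega, ?_⟩
    have key : ∀ b a, a ≤ b → alphaHier (e + 1 + 1) a ≤ alphaHier (e + 1 + 1) b := by
      intro b
      induction b using Nat.strong_induction_on with
      | _ b ihb =>
        intro a hab
        by_cases ha : 2 ≤ a
        · rw [hrec a ha, hrec b (by omega)]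
          have := ihb _ (hlt b (by omega)) _ (hmono hab)
          omega
        · rw [hsmall a (by omega)]
          omega
    intro a b hab
    exact key b a hab

lemma al_lt {e m : ℕ} (he : 1 ≤ e) (hm : 2 ≤ m) : alphaHier e m < m := by
  obtain ⟨e, rfl⟩ : ∃ n, e = n + 1 := ⟨e - 1, by omega⟩
  exact (al_basic e).1 m hm

lemma al_pos {e m : ℕ} (he : 1 ≤ e) (hm : 2 ≤ m) : 1 ≤ alphaHier e m := by
  obtain ⟨e, rfl⟩ : ∃ n, e = n + 1 := ⟨e - 1, by omega⟩
  exact (al_basic e).2.1 m hm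

lemma al_mono {e : ℕ} (he : 1 ≤ e) : Monotone (alphaHier e) := by
  obtain ⟨e, rfl⟩ : ∃ n, e = n + 1 := ⟨e - 1, by omega⟩
  exact (al_basic e).2.2

lemma al_small {e m : ℕ} (he : 2 ≤ e) (hm : m ≤ 1) : alphaHier e m = 0 := by
  obtain ⟨e, rfl⟩ : ∃ n, e = n + 2 := ⟨e - 2, by omega⟩
  show iterCount (alphaHier (e + 1)) m m = 0
  cases m with
  | zero => rfl
  | succ m => simp [iterCount, hm]

lemma al_rec {e m : ℕ} (he : 1 ≤ e) (hm : 2 ≤ m) :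
    alphaHier (e + 1) m = 1 + alphaHier (e + 1) (alphaHier e m) := by
  obtain ⟨e, rfl⟩ : ∃ n, e = n + 1 := ⟨e - 1, by omega⟩
  obtain ⟨m, rfl⟩ : ∃ n, m = n + 1 := ⟨m - 1, by omega⟩
  have h1 := al_lt he hm
  show iterCount (alphaHier (e + 1)) (m + 1) (m + 1) = 1 + iterCount (alphaHier (e + 1)) _ _
  rw [iterCount, if_neg (by omega)]
  rw [iterCount_fuel (al_basic e).1 m (alphaHier (e + 1) (m + 1)) _ (by omega) (by omega)]

lemma al_succ_le {e m : ℕ} (he : 1 ≤ e) (hm : 2 ≤ m) :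
    alphaHier (e + 1) m ≤ alphaHier e m := by
  rw [al_rec he hm]
  have hp := al_pos he hm
  by_cases h : 2 ≤ alphaHier e m
  · have := al_lt (e := e + 1) (by omega) h
    omega
  · rw [al_small (by omega) (by omega)]
    omega

lemma al_le_two {e : ℕ} (he : 2 ≤ e) (m : ℕ) : alphaHier e m ≤ alphaHier 2 m := by
  by_cases hm : 2 ≤ m
  · induction e, he using Nat.le_induction with
    | base => exact le_rfl
    | succ e he ih => exact (al_succ_le (by omega) hm).trans ih
  · rw [al_small he (by omega)]
    omega

lemma al_two_le_clog (m : ℕ) : alphaHier 2 m ≤ Nat.clog 2 m := by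
  induction m using Nat.strong_induction_on with
  | _ m ih =>
    by_cases hm : 2 ≤ m
    · have hr := al_rec (e := 1) le_rfl hm
      have h1 : alphaHier 1 m = (m + 1) / 2 := rfl
      rw [h1] at hr
      have := ih ((m + 1) / 2) (by omega)
      rw [Nat.clog_of_two_le (by norm_num) hm]
      have h2 : (m + 2 - 1) / 2 = (m + 1) / 2 := rfl
      rw [h2]
      have hr' : alphaHier 2 m = 1 + alphaHier 2 ((m + 1) / 2) := hr
      omega
    · rw [al_small le_rfl (by omega)]
      omega

lemma exists_threshold (A q : ℕ) : ∃ X : ℕ, 2 ≤ X ∧ ∀ z, X ≤ z → A * alphaHier 2 z ^ q ≤ z := by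
  have ht := tendsto_pow_const_div_const_pow_of_one_lt q (r := (2 : ℝ)) (by norm_num)
  have hev : ∀ᶠ n : ℕ in Filter.atTop, (n : ℝ) ^ q / 2 ^ n < 1 / (2 * A + 1) :=
    ht.eventually_lt_const (by positivity)
  obtain ⟨N, hN⟩ := Filter.eventually_atTop.mp hev
  refine ⟨2 ^ (N + 1), ?_, ?_⟩
  · have := Nat.one_le_two_pow (n := N)
    rw [pow_succ]
    omega
  · intro z hz
    have hz2 : 2 ≤ z := by
      have := Nat.one_le_two_pow (n := N)
      rw [pow_succ] at hz
      omega
    have hcl : N + 1 ≤ Nat.clog 2 z := by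
      have := Nat.clog_mono_right 2 hz
      rwa [Nat.clog_pow 2 _ (by norm_num)] at this
    have h1 := hN (Nat.clog 2 z) (by omega)
    have h2 : A * (Nat.clog 2 z) ^ q * 2 ≤ 2 ^ Nat.clog 2 z := by
      rw [div_lt_div_iff₀ (by positivity) (by positivity)] at h1
      have h3 : ((Nat.clog 2 z) ^ q * (2 * A + 1) : ℕ) < (1 * 2 ^ Nat.clog 2 z : ℕ) := by
        exact_mod_cast h1
      have h3' : (Nat.clog 2 z) ^ q * (2 * A + 1) =
          A * (Nat.clog 2 z) ^ q * 2 + (Nat.clog 2 z) ^ q := by ring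
      omega
    have h4 : 2 ^ (Nat.clog 2 z - 1) < z := Nat.pow_pred_clog_lt_self (by norm_num) (by omega)
    have h5 : 2 ^ Nat.clog 2 z = 2 ^ (Nat.clog 2 z - 1) * 2 := by
      rw [← pow_succ]
      congr 1
      omega
    have h6 : alphaHier 2 z ^ q ≤ (Nat.clog 2 z) ^ q := Nat.pow_le_pow_left (al_two_le_clog z) q
    have h7 := Nat.mul_le_mul_left A h6
    omega

lemma base_one {ε k r m : ℕ} (hk : 1 ≤ k + ε) (hm : 1 ≤ m) : BdAt ε 1 k r m (r * m) := by
  intro ι V f lo h1 h2 h3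
  have : V.card < r := by
    by_contra hc
    apply h3
    refine ⟨V, subset_rfl, not_lt.mp hc, fun _ => 0, fun _ _ _ => le_rfl, fun _ => Nat.one_pos, ?_⟩
    intro j hj i hi
    have hi0 : i = 0 := by omega
    subst hi0
    have := h2 j hj
    simp only [needF, Finset.filter_true, if_true]
    omega
  nlinarith

lemma base_two {ε r m : ℕ} : BdAt ε 2 2 r m (r * m) := by
  classical
  intro ι V f lo h1 h2 h3
  by_contra hc
  push Not at hc
  have hne : ∀ j ∈ V, (f j).Nonempty := fun j hj => Finset.card_pos.mp (by have := h2 j hj; omega)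
  set x : ι → ℕ := fun j => if h : (f j).Nonempty then (f j).min' h else 0 with hx
  have hmaps : ∀ j ∈ V, x j ∈ Finset.Ico lo (lo + m) := by
    intro j hj
    simp only [hx, hne j hj, dif_pos]
    exact h1 j hj ((f j).min'_mem _)
  obtain ⟨q, hq, hcard⟩ := Finset.exists_lt_card_fiber_of_mul_lt_card_of_maps_to (n := r) hmaps
    (by simpa [mul_comm] using hc)
  apply h3
  refine ⟨V.filter (fun j => x j = q), Finset.filter_subset _ _, hcard.le,
    fun e => if e ≤ q then 0 else 1, ?_, ?_, ?_⟩
  · intro a b hab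
    dsimp only
    split_ifs <;> omega
  · intro e
    dsimp only
    split_ifs <;> omega
  · intro j hj i hi
    have hj' := Finset.mem_filter.mp hj
    have hjne := hne j hj'.1
    have hxq : (f j).min' hjne = q := by
      have := hj'.2
      simpa only [hx, hjne, dif_pos] using this
    have hqf : q ∈ f j := hxq ▸ (f j).min'_mem hjne
    have hneed : needF ε 2 i ≤ 1 := by
      simp only [needF]
      split_ifs <;> omega
    refine hneed.trans (Finset.card_pos.mpr ?_)
    have h2i : i = 0 ∨ i = 1 := by omega
    rcases h2i with rfl | rfl
    · exact ⟨q, by simp [hqf]⟩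
    · obtain ⟨e, he, heq⟩ := Finset.exists_mem_ne (s := f j) (h2 j hj'.1) q
      have := (f j).min'_le e he
      refine ⟨e, Finset.mem_filter.mpr ⟨he, ?_⟩⟩
      exact if_neg (by omega)

/-- The bound with constant `C` at level `d`. -/
def BdAll (ε s k C d : ℕ) : Prop :=
  ∀ r m, 1 ≤ m → BdAt ε s k r m (r * (C * alphaHier d m ^ (s - 2)) * m)

lemma BdAll.mono {ε s k k' C C' d : ℕ} (h : BdAll ε s k C d) (hk : k ≤ k') (hC : C ≤ C') :
    BdAll ε s k' C' d := by
  intro r m hm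
  refine (h r m hm).mono hk ?_
  gcongr

lemma BdAll.zero {ε s k C d r m : ℕ} (h : BdAll ε s k C d) (hk : 1 ≤ k) :
    BdAt ε s k r m (r * (C * alphaHier d m ^ (s - 2)) * m) := by
  rcases Nat.eq_zero_or_pos m with rfl | hm
  · exact BdAt.of_lt hk
  · exact h r m hm

lemma BdAll.le {ε s k C d r m a p : ℕ} (h : BdAll ε s k C d) (hk : 1 ≤ k)
    (ha : alphaHier d m ≤ a) (ha1 : 1 ≤ a) (hp : s - 2 ≤ p) : BdAt ε s k r m (r * (C * a ^ p) * m) := by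
  refine (h.zero hk).mono le_rfl ?_
  have h1 : alphaHier d m ^ (s - 2) ≤ a ^ p :=
    (Nat.pow_le_pow_left ha _).trans (Nat.pow_le_pow_right ha1 hp)
  gcongr

lemma pow_step {a s : ℕ} (ha : 1 ≤ a) (hs : 1 ≤ s) : (a - 1) ^ s + a ^ (s - 1) ≤ a ^ s := by
  obtain ⟨a, rfl⟩ : ∃ n, a = n + 1 := ⟨a - 1, by omega⟩
  obtain ⟨s, rfl⟩ : ∃ n, s = n + 1 := ⟨s - 1, by omega⟩
  simp only [Nat.add_sub_cancel]
  have : a ^ s ≤ (a + 1) ^ s := Nat.pow_le_pow_left (by omega) s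
  rw [pow_succ, pow_succ]
  nlinarith

lemma level_two {ε s k k1 k2 C1 C2 C : ℕ} (hs : 1 ≤ s) (hk2 : 1 ≤ k2 + ε) (hk1 : 1 ≤ k1)
    (hk : 2 * (k1 + ε - 1) + 1 ≤ k) (hkk : 2 ≤ k) (h1 : BdAll ε (s + 1) k1 C1 2)
    (h2 : BdAll ε s k2 C2 2) (hC : 2 * C1 + C2 ≤ C) : BdAll ε (s + 2) k C 2 := by
  intro r m
  induction m using Nat.strong_induction_on with
  | _ m ih =>
    intro hm1
    by_cases hm : 2 ≤ m
    swap
    · exact BdAt.of_lt (by omega)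
    set t := (m + 1) / 2 with ht
    set a := alphaHier 2 m with ha
    have ha1 : 1 ≤ a := al_pos (by omega) hm
    have hrec : a = 1 + alphaHier 2 t := al_rec (e := 1) le_rfl hm
    have htm : t < m := by omega
    have hmono : ∀ m' ≤ t, alphaHier 2 m' ≤ a - 1 := by
      intro m' hm'
      have := al_mono (e := 2) (by omega) hm'
      omega
    have hst := step_bound (ε := ε) (s := s) (k := k) (k1 := k1) (k2 := k2) (k3 := 3) (k4 := 3)
      (r := r) (m := m) (b := 2) (t := t) (ψ := r * (C * (a - 1) ^ s)) (ψ1 := r * (C1 * a ^ (s - 1)))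
      (ψ2 := r * (C2 * a ^ (s - 1))) (X3 := 0) (X4 := 0) hs (by omega) (by omega) le_rfl le_rfl hk2
      hk1 (by simpa using hk) ?_ ?_ ?_ (BdAt.of_lt (by omega)) (BdAt.of_lt (by omega))
    · refine hst.mono le_rfl ?_
      have hp := pow_step ha1 hs
      show _ ≤ r * (C * a ^ s) * m
      calc r * (C * (a - 1) ^ s) * m + 2 * (r * (C1 * a ^ (s - 1)) * m) +
            r * (C2 * a ^ (s - 1)) * m + 0 + 0
          = r * (C * (a - 1) ^ s + (2 * C1 + C2) * a ^ (s - 1)) * m := by ring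
        _ ≤ r * (C * (a - 1) ^ s + C * a ^ (s - 1)) * m := by gcongr
        _ = r * (C * ((a - 1) ^ s + a ^ (s - 1))) * m := by ring
        _ ≤ r * (C * a ^ s) * m := by gcongr
    · intro m' hm'
      rcases Nat.eq_zero_or_pos m' with rfl | hpos
      · exact BdAt.of_lt (by omega)
      refine (ih m' (by omega) hpos).mono le_rfl ?_
      have := hmono m' hm'
      show r * (C * alphaHier 2 m' ^ s) * m' ≤ _
      gcongr
    · intro m' hm'
      exact h1.le hk1 ((hmono m' hm').trans (by omega)) ha1 (by omega)
    · intro m' hm1 hm'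
      refine (h2 r m' hm1).mono le_rfl ?_
      have h3 : alphaHier 2 m' ^ (s - 2) ≤ a ^ (s - 1) :=
        (Nat.pow_le_pow_left ((hmono m' hm').trans (by omega)) _).trans
          (Nat.pow_le_pow_right ha1 (by omega))
      gcongr

lemma one_step {ε s k k1 k2 k3 k4 C1 C2 Q Ψ e a r m : ℕ} (hs : 1 ≤ s) (he : 2 ≤ e)
    (hk3 : 3 ≤ k3) (hk34 : k3 ≤ k4) (hk2 : 1 ≤ k2 + ε) (hk1 : 1 ≤ k1)
    (hk : 2 * (k1 + ε - 1) + (k3 - 3) * (k2 + 2 * ε - 1) + ε * (k4 - k3) + 1 ≤ k)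
    (h1 : BdAll ε (s + 1) k1 C1 (e + 1)) (h2 : BdAll ε s k2 C2 (e + 1))
    (h3 : BdAll 0 (s + 2) k3 (4 * Q) e) (h4 : BdAll ε (s + 2) k4 (4 * Q) e)
    (hm : 2 ≤ m) (htm : 16 * alphaHier e m ^ s ≤ m) (ha : alphaHier (e + 1) m ≤ a) (ha1 : 1 ≤ a)
    (h0 : ∀ m' ≤ 16 * alphaHier e m ^ s, BdAt ε (s + 2) k r m' (r * Ψ * m')) :
    BdAt ε (s + 2) k r m (r * (Ψ + (2 * C1 + C2) * a ^ (s - 1) + Q) * m) := by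
  set y := alphaHier e m with hy
  set t := 16 * y ^ s with ht
  have hy1 : 1 ≤ y := al_pos (by omega) hm
  have hys : 1 ≤ y ^ s := Nat.one_le_pow _ _ hy1
  have ht1 : 1 ≤ t := by omega
  set b := (m + t - 1) / t with hb
  have hb1 : b * t ≤ m + t - 1 := Nat.div_mul_le_self _ _
  have hb2 : m ≤ b * t := by
    have := Nat.lt_div_mul_add (a := m + t - 1) (b := t) (by omega)
    rw [← hb] at this
    omega
  have hbm : b ≤ m := by
    have h5 : b ≤ b * t := Nat.le_mul_of_pos_right _ ht1
    by_contra hc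
    have h6 : (m + 1) * t ≤ b * t := Nat.mul_le_mul_right _ (by omega)
    have h7 : (m + 1) * t = m * t + t := by ring
    have h8 : m ≤ m * t := Nat.le_mul_of_pos_right _ ht1
    omega
  have hby : alphaHier e b ≤ y := al_mono (by omega) hbm
  have hmono : ∀ m' ≤ t, alphaHier (e + 1) m' ≤ a := by
    intro m' hm'
    exact (al_mono (e := e + 1) (by omega) (hm'.trans htm)).trans ha
  have hst := step_bound (ε := ε) (s := s) (k := k) (k1 := k1) (k2 := k2) (k3 := k3) (k4 := k4)
    (r := r) (m := m) (b := b) (t := t) (ψ := r * Ψ) (ψ1 := r * (C1 * a ^ (s - 1)))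
    (ψ2 := r * (C2 * a ^ (s - 1))) (X3 := r * (4 * Q * y ^ s) * b) (X4 := r * (4 * Q * y ^ s) * b)
    hs ht1 hb2 hk3 hk34 hk2 hk1 hk h0 ?_ ?_ (h3.le (by omega) hby hy1 (by omega))
    (h4.le (by omega) hby hy1 (by omega))
  · refine hst.mono le_rfl ?_
    have h8 : 8 * (y ^ s * b) ≤ m := by
      have : b * t = 16 * (y ^ s * b) := by rw [ht]; ring
      omega
    calc r * Ψ * m + 2 * (r * (C1 * a ^ (s - 1)) * m) + r * (C2 * a ^ (s - 1)) * m +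
          r * (4 * Q * y ^ s) * b + r * (4 * Q * y ^ s) * b
        = r * (Ψ + (2 * C1 + C2) * a ^ (s - 1)) * m + r * Q * (8 * (y ^ s * b)) := by ring
      _ ≤ r * (Ψ + (2 * C1 + C2) * a ^ (s - 1)) * m + r * Q * m := by gcongr
      _ = _ := by ring
  · intro m' hm'
    exact h1.le hk1 (hmono m' hm') ha1 (by omega)
  · intro m' hm1 hm'
    refine (h2 r m' hm1).mono le_rfl ?_
    have h3 : alphaHier (e + 1) m' ^ (s - 2) ≤ a ^ (s - 1) :=
      (Nat.pow_le_pow_left (hmono m' hm') _).trans (Nat.pow_le_pow_right ha1 (by omega))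
    gcongr

lemma level_succ {ε s k k1 k2 k3 k4 kk C1 C2 C0 Q e X : ℕ} (hs : 1 ≤ s) (he : 2 ≤ e)
    (hX2 : 2 ≤ X) (hX : ∀ z, X ≤ z → 16 ^ (s + 1) * alphaHier 2 z ^ (s * s) ≤ z)
    (hk3 : 3 ≤ k3) (hk34 : k3 ≤ k4) (hk2 : 1 ≤ k2 + ε) (hk1 : 1 ≤ k1)
    (hk : 2 * (k1 + ε - 1) + (k3 - 3) * (k2 + 2 * ε - 1) + ε * (k4 - k3) + 1 ≤ k)
    (hkk : 2 ≤ kk) (hkk' : kk ≤ k)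
    (h1 : BdAll ε (s + 1) k1 C1 (e + 1)) (h2 : BdAll ε s k2 C2 (e + 1))
    (h3 : BdAll 0 (s + 2) k3 (4 * Q) e) (h4 : BdAll ε (s + 2) k4 (4 * Q) e)
    (h5 : BdAll ε (s + 2) kk C0 2) (hQ0 : C0 * X ^ s ≤ Q) (hQB : 2 * C1 + C2 ≤ Q) :
    BdAll ε (s + 2) k (4 * Q) (e + 1) := by
  have hsmall : ∀ r m, m ≤ X → BdAt ε (s + 2) k r m (r * Q * m) := by
    intro r m hm
    refine (h5.le (r := r) (m := m) (a := X) (p := s) (by omega) ?_ (by omega) (by omega)).mono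
      hkk' ?_
    · by_cases h : 2 ≤ m
      · exact (al_lt (by omega) h).le.trans hm
      · rw [al_small le_rfl (by omega)]
        omega
    · gcongr
  have h16 : ∀ z, X ≤ z → 16 * (16 * alphaHier 2 z ^ s) ^ s ≤ z := by
    intro z hz
    refine le_trans (le_of_eq ?_) (hX z hz)
    rw [mul_pow, ← pow_mul]
    ring
  have h16' : ∀ z, X ≤ z → 16 * alphaHier e z ^ s ≤ z := by
    intro z hz
    refine le_trans ?_ (h16 z hz)
    have h6 : alphaHier e z ≤ 16 * alphaHier 2 z ^ s := by
      have h7 := al_le_two he z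
      have h8 : alphaHier 2 z ≤ alphaHier 2 z ^ s := Nat.le_self_pow (by omega) _
      omega
    gcongr
  intro r m
  induction m using Nat.strong_induction_on with
  | _ m ih =>
    intro hm1
    by_cases hm : 2 ≤ m
    swap
    · exact BdAt.of_lt (by omega)
    set a := alphaHier (e + 1) m with ha
    have ha1 : 1 ≤ a := al_pos (by omega) hm
    have has : 1 ≤ a ^ s := Nat.one_le_pow _ _ ha1
    have has1 : 1 ≤ a ^ (s - 1) := Nat.one_le_pow _ _ ha1
    have hp := pow_step ha1 hs
    show BdAt ε (s + 2) k r m (r * (4 * Q * a ^ s) * m)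
    by_cases hmX : m ≤ X
    · refine (hsmall r m hmX).mono le_rfl ?_
      have : Q ≤ 4 * Q * a ^ s := by nlinarith
      gcongr
    push Not at hmX
    set y := alphaHier e m with hy
    have hyrec : a = 1 + alphaHier (e + 1) y := al_rec (by omega) hm
    have hym : y < m := al_lt (by omega) hm
    have hBa : (2 * C1 + C2) * a ^ (s - 1) ≤ Q * a ^ (s - 1) := Nat.mul_le_mul_right _ hQB
    have hpp : a ^ (s - 1) ≤ a ^ s := Nat.pow_le_pow_right ha1 (by omega)
    have hQ1 : Q ≤ Q * a ^ (s - 1) := Nat.le_mul_of_pos_right _ has1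
    have hQ2 : Q * a ^ (s - 1) ≤ Q * a ^ s := Nat.mul_le_mul_left _ hpp
    have hQ3 : Q * ((a - 1) ^ s + a ^ (s - 1)) ≤ Q * a ^ s := Nat.mul_le_mul_left _ hp
    rw [Nat.mul_add] at hQ3
    by_cases htX : 16 * y ^ s ≤ X
    · refine (one_step (Ψ := Q) (a := a) hs he hk3 hk34 hk2 hk1 hk h1 h2 h3 h4 hm
        (h16' m hmX.le) le_rfl ha1 ?_).mono le_rfl ?_
      · intro m' hm'
        exact hsmall r m' (hm'.trans htX)
      · have : Q + (2 * C1 + C2) * a ^ (s - 1) + Q ≤ 4 * Q * a ^ s := by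
          rw [mul_assoc]
          omega
        gcongr
    · push Not at htX
      refine (one_step (Ψ := 4 * (Q * (a - 1) ^ s) + (2 * C1 + C2) * a ^ (s - 1) + Q) (a := a) hs he
        hk3 hk34 hk2 hk1 hk h1 h2 h3 h4 hm (h16' m hmX.le) le_rfl ha1 ?_).mono le_rfl ?_
      · intro m' hm'
        by_cases hm'X : m' ≤ X
        · refine (hsmall r m' hm'X).mono le_rfl ?_
          have : Q ≤ 4 * (Q * (a - 1) ^ s) + (2 * C1 + C2) * a ^ (s - 1) + Q := by omega
          gcongr
        · push Not at hm'X
          have hm'm : m' ≤ m := hm'.trans (h16' m hmX.le)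
          refine one_step (Ψ := 4 * (Q * (a - 1) ^ s)) (a := a) hs he hk3 hk34 hk2 hk1 hk h1 h2 h3 h4
            (by omega) (h16' m' hm'X.le) (al_mono (by omega) hm'm) ha1 ?_
          intro m'' hm''
          have hty : 16 * alphaHier e m' ^ s ≤ y := by
            have h9 : 16 * (16 * alphaHier 2 (16 * y ^ s) ^ s) ^ s ≤ 16 * y ^ s := h16 _ htX.le
            have h10 : (16 * alphaHier 2 (16 * y ^ s) ^ s) ^ s ≤ y ^ s := by omega
            have h11 := (Nat.pow_le_pow_iff_left (by omega : s ≠ 0)).mp h10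
            refine le_trans ?_ h11
            have h12 : alphaHier e m' ≤ alphaHier 2 (16 * y ^ s) :=
              (al_le_two he m').trans (al_mono (by omega) hm')
            gcongr
          rcases Nat.eq_zero_or_pos m'' with rfl | hpos
          · exact BdAt.of_lt (by omega)
          refine (ih m'' (by omega) hpos).mono le_rfl ?_
          have h13 : alphaHier (e + 1) m'' ≤ a - 1 := by
            have := al_mono (e := e + 1) (by omega) (hm''.trans hty)
            omega
          have h14 : alphaHier (e + 1) m'' ^ (s + 2 - 2) ≤ (a - 1) ^ s :=
            Nat.pow_le_pow_left h13 s
          rw [mul_assoc 4 Q]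
          gcongr
      · have : 4 * (Q * (a - 1) ^ s) + (2 * C1 + C2) * a ^ (s - 1) + Q +
            (2 * C1 + C2) * a ^ (s - 1) + Q ≤ 4 * Q * a ^ s := by
          rw [mul_assoc 4 Q]
          omega
        gcongr

/-- The hierarchy `R` with the convention `R_1 = 1`. -/
def KR (s d : ℕ) : ℕ := if s = 1 then 1 else Rfun s d

lemma KR_one (d : ℕ) : KR 1 d = 1 := rfl

lemma KR_ge (s d : ℕ) : KR (s + 2) d = Rfun (s + 2) d := by
  simp [KR]

lemma Rfun_two (s : ℕ) : Rfun (s + 2) 2 = 2 ^ s + 1 := by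
  match s with
  | 0 => simp [Rfun]
  | 1 => simp [Rfun]
  | 2 => simp [Rfun]
  | s + 3 => simp [Rfun]

lemma Rfun_facts (d : ℕ) : ∀ s : ℕ, 2 ≤ Rfun (s + 2) (d + 2) ∧ 3 ≤ Rfun (s + 3) (d + 2) := by
  induction d with
  | zero =>
    intro s
    have h1 := Rfun_two s
    have h2 := Rfun_two (s + 1)
    have h3 := Nat.one_le_two_pow (n := s)
    rw [pow_succ] at h2
    constructor
    · show 2 ≤ Rfun (s + 2) 2
      omega
    · show 3 ≤ Rfun (s + 1 + 2) 2
      omega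
  | succ d ih =>
    have key : ∀ s, 3 ≤ Rfun (s + 3) (d + 1 + 2) := by
      intro s
      induction s using Nat.strong_induction_on with
      | _ s ihs =>
        match s with
        | 0 => simp [Rfun]
        | 1 =>
          show 3 ≤ Rfun 4 (d + 3)
          rw [show Rfun 4 (d + 3) = 2 * (d + 3) + 1 by simp [Rfun]]
          omega
        | s + 2 =>
          have h1 := ihs (s + 1) (by omega)
          have h2 : Rfun (s + 2 + 3) (d + 1 + 2) = 2 * (Rfun (s + 4) (d + 3) - 1) +
              (Rfun (s + 3) (d + 3) - 1) * (Rfun (s + 5) (d + 2) - 3) + 1 := by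
            simp only [Rfun]
          have h1' : 3 ≤ Rfun (s + 4) (d + 3) := h1
          rw [h2]
          omega
    intro s
    refine ⟨?_, key s⟩
    match s with
    | 0 => simp [Rfun]
    | s + 1 =>
      have : 3 ≤ Rfun (s + 1 + 2) (d + 1 + 2) := key s
      omega

lemma Rfun_rec (s e : ℕ) (hs : 1 ≤ s) (he : 2 ≤ e) : Rfun (s + 2) (e + 1) =
    2 * (KR (s + 1) (e + 1) - 1) + (Rfun (s + 2) e - 3) * (KR s (e + 1) - 1) + 1 := by
  obtain ⟨d, rfl⟩ : ∃ d, e = d + 2 := ⟨e - 2, by omega⟩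
  match s with
  | 1 => simp [Rfun, KR]
  | 2 =>
    simp [Rfun, KR]
    omega
  | s + 3 =>
    simp only [KR]
    rw [if_neg (by omega), if_neg (by omega)]
    show Rfun (s + 5) (d + 3) = _
    rw [Rfun]
    ring

lemma Dfun_two (s : ℕ) (hs : 1 ≤ s) : Dfun (s + 2) 2 = 2 * Dfun (s + 1) 2 + 1 := by
  match s with
  | 1 => simp [Dfun]
  | s + 2 =>
    simp only [Dfun]
    have h1 := Nat.one_le_two_pow (n := s)
    have e1 : 2 ^ (s + 1) = 2 * 2 ^ s := by ring
    have e2 : 2 ^ (s + 1 + 1) = 4 * 2 ^ s := by ring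
    have e3 : 2 ^ (s + 1 + 2) = 8 * 2 ^ s := by ring
    have e4 : 2 ^ (s + 2) = 4 * 2 ^ s := by ring
    omega

lemma Dfun_rec (s e : ℕ) (hs : 1 ≤ s) (he : 2 ≤ e) (h : Rfun (s + 2) e ≤ Dfun (s + 2) e) :
    Dfun (s + 2) (e + 1) = 2 * Dfun (s + 1) (e + 1) +
      (Rfun (s + 2) e - 3) * (Dfun s (e + 1) + 1) + (Dfun (s + 2) e - Rfun (s + 2) e) + 1 := by
  obtain ⟨d, rfl⟩ : ∃ d, e = d + 2 := ⟨e - 2, by omega⟩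
  obtain ⟨s, rfl⟩ : ∃ n, s = n + 1 := ⟨s - 1, by omega⟩
  have h1 : Dfun (s + 1 + 2) (d + 2 + 1) = 2 * Dfun (s + 2) (d + 3) +
      (Dfun (s + 1) (d + 3) + 1) * (Rfun (s + 3) (d + 2) - 3)
        + Dfun (s + 3) (d + 2) - Rfun (s + 3) (d + 2) + 1 := by
    simp only [Dfun]
  rw [h1, mul_comm (Dfun (s + 1) (d + 3) + 1)]
  have h' : Rfun (s + 3) (d + 2) ≤ Dfun (s + 3) (d + 2) := h
  show _ = 2 * Dfun (s + 2) (d + 3) + (Rfun (s + 3) (d + 2) - 3) * (Dfun (s + 1) (d + 3) + 1) +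
    (Dfun (s + 3) (d + 2) - Rfun (s + 3) (d + 2)) + 1
  omega

lemma R_le_D (d : ℕ) : ∀ s, Rfun (s + 2) (d + 2) ≤ Dfun (s + 2) (d + 2) := by
  induction d with
  | zero =>
    intro s
    rw [Rfun_two]
    induction s with
    | zero => simp [Dfun]
    | succ s ih =>
      have h1 := Dfun_two (s + 1) (by omega)
      have h2 : Dfun (s + 1 + 2) (0 + 2) = 2 * Dfun (s + 2) 2 + 1 := h1
      have h3 : 2 ^ s + 1 ≤ Dfun (s + 2) 2 := ih
      rw [h2, pow_succ]
      omega
  | succ d ih =>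
    intro s
    induction s using Nat.strong_induction_on with
    | _ s ihs =>
      match s with
      | 0 => simp [Dfun, Rfun]
      | s + 1 =>
        have h1 : Rfun (s + 1 + 2) (d + 1 + 2) = _ := Rfun_rec (s + 1) (d + 2) (by omega) (by omega)
        have h2 : Dfun (s + 1 + 2) (d + 1 + 2) = _ :=
          Dfun_rec (s + 1) (d + 2) (by omega) (by omega) (ih (s + 1))
        rw [h1, h2]
        have h3 : KR (s + 1 + 1) (d + 2 + 1) ≤ Dfun (s + 1 + 1) (d + 2 + 1) := by
          rw [KR_ge]
          exact ihs s (by omega)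
        have h4 : KR (s + 1) (d + 2 + 1) - 1 ≤ Dfun (s + 1) (d + 2 + 1) + 1 := by
          match s with
          | 0 => simp [KR]
          | s + 1 =>
            have h5 : Rfun (s + 2) (d + 2 + 1) ≤ Dfun (s + 2) (d + 2 + 1) := ihs s (by omega)
            rw [KR_ge]
            show Rfun (s + 2) (d + 2 + 1) - 1 ≤ Dfun (s + 2) (d + 2 + 1) + 1
            omega
        have h6 := Nat.mul_le_mul_left (Rfun (s + 1 + 2) (d + 2) - 3) h4
        omega

lemma master {ε : ℕ} {K K' : ℕ → ℕ → ℕ}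
    (F1 : ∀ d, 1 ≤ K 1 d + ε) (F2 : ∀ d, K 2 d = 2)
    (F3 : ∀ s, 1 ≤ s → 2 * (K (s + 1) 2 + ε - 1) + 1 ≤ K (s + 2) 2)
    (F4 : ∀ s e, 1 ≤ s → 2 ≤ e → 2 * (K (s + 1) (e + 1) + ε - 1) +
      (K' (s + 2) e - 3) * (K s (e + 1) + 2 * ε - 1) + ε * (K (s + 2) e - K' (s + 2) e) + 1 ≤
        K (s + 2) (e + 1))
    (F5 : ∀ s e, 1 ≤ s → 2 ≤ e → K (s + 2) e ≤ K (s + 2) (e + 1))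
    (F6 : ∀ s e, 1 ≤ s → 2 ≤ e → 3 ≤ K' (s + 2) e ∧ K' (s + 2) e ≤ K (s + 2) e)
    (F7 : (∀ s, 1 ≤ s → ∃ C, ∀ d, 2 ≤ d → BdAll 0 s (K' s d) C d) ∨ (ε = 0 ∧ K = K')) :
    ∀ s, 1 ≤ s → ∃ C, ∀ d, 2 ≤ d → BdAll ε s (K s d) C d := by
  intro s
  induction s using Nat.strong_induction_on with
  | _ s ih =>
    intro hs
    match s, hs with
    | 1, _ =>
      refine ⟨1, fun d _ r m hm => ?_⟩
      simpa using base_one (F1 d) hm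
    | 2, _ =>
      refine ⟨1, fun d _ r m hm => ?_⟩
      rw [F2]
      simpa using base_two (ε := ε) (r := r) (m := m)
    | s + 3, _ =>
      obtain ⟨C1, hC1⟩ := ih (s + 2) (by omega) (by omega)
      obtain ⟨C2, hC2⟩ := ih (s + 1) (by omega) (by omega)
      obtain ⟨X, hX2, hX⟩ := exists_threshold (16 ^ (s + 1 + 1)) ((s + 1) * (s + 1))
      have hK3 : ∀ s e, 1 ≤ s → 2 ≤ e → 3 ≤ K (s + 2) e := fun s e h1 h2 =>
        (F6 s e h1 h2).1.trans (F6 s e h1 h2).2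
      have hk1 : ∀ d, 2 ≤ d → 1 ≤ K (s + 2) d := by
        intro d hd
        rcases Nat.eq_zero_or_pos s with rfl | h
        · rw [F2]
          omega
        · have := hK3 s d h hd
          omega
      have hk2 : ∀ d, 2 ≤ d → 1 ≤ K (s + 1) d + ε := by
        intro d hd
        match s with
        | 0 => exact F1 d
        | 1 =>
          rw [F2]
          omega
        | s + 2 =>
          have := hK3 (s + 1) d (by omega) hd
          have h' : 3 ≤ K (s + 2 + 1) d := this
          omega
      have hbase : BdAll ε (s + 3) (K (s + 3) 2) (2 * C1 + C2) 2 :=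
        level_two (s := s + 1) (by omega) (hk2 2 le_rfl) (hk1 2 le_rfl) (F3 (s + 1) (by omega))
          (by have h : 3 ≤ K (s + 3) 2 := hK3 (s + 1) 2 (by omega) le_rfl; omega) (hC1 2 le_rfl) (hC2 2 le_rfl) le_rfl
      have hmonoK : ∀ e, 2 ≤ e → K (s + 3) 2 ≤ K (s + 3) e := by
        intro e he
        induction e, he using Nat.le_induction with
        | base => exact le_rfl
        | succ e he ihe => exact ihe.trans (F5 (s + 1) e (by omega) he)
      obtain ⟨C', hC'⟩ : ∃ C', (∀ d, 2 ≤ d → BdAll 0 (s + 3) (K' (s + 3) d) C' d) ∨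
          (ε = 0 ∧ K = K') := by
        rcases F7 with h | h
        · obtain ⟨C', h'⟩ := h (s + 3) (by omega)
          exact ⟨C', Or.inl h'⟩
        · exact ⟨0, Or.inr h⟩
      set Q := (2 * C1 + C2) * X ^ (s + 1) + (2 * C1 + C2) + C' with hQ
      refine ⟨4 * Q, ?_⟩
      intro d hd
      induction d, hd using Nat.le_induction with
      | base => exact hbase.mono le_rfl (by omega)
      | succ e he ihe =>
        have h3 : BdAll 0 (s + 3) (K' (s + 3) e) (4 * Q) e := by
          rcases hC' with h | ⟨h, h'⟩
          · exact (h e he).mono le_rfl (by omega)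
          · subst h
            subst h'
            exact ihe
        have hF6 := F6 (s + 1) e (by omega) he
        exact level_succ (s := s + 1) (k3 := K' (s + 3) e) (k4 := K (s + 3) e)
          (kk := K (s + 3) 2) (C0 := 2 * C1 + C2)
          (by omega) he hX2 hX hF6.1 hF6.2 (hk2 (e + 1) (by omega)) (hk1 (e + 1) (by omega))
          (F4 (s + 1) e (by omega) he)
          (by have h : 3 ≤ K (s + 3) 2 := hK3 (s + 1) 2 (by omega) le_rfl; omega) (hmonoK (e + 1) (by omega))
          (hC1 (e + 1) (by omega)) (hC2 (e + 1) (by omega)) h3 ihe hbase (by omega) (by omega)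

lemma KR_facts (s e : ℕ) (hs : 1 ≤ s) (he : 2 ≤ e) :
    2 ≤ KR (s + 1) e ∧ 3 ≤ KR (s + 2) e ∧ 1 ≤ KR s e := by
  obtain ⟨d, rfl⟩ : ∃ d, e = d + 2 := ⟨e - 2, by omega⟩
  obtain ⟨s, rfl⟩ : ∃ n, s = n + 1 := ⟨s - 1, by omega⟩
  rw [KR_ge, KR_ge]
  refine ⟨(Rfun_facts d s).1, (Rfun_facts d s).2, ?_⟩
  match s with
  | 0 => simp [KR]
  | s + 1 =>
    rw [KR_ge]
    have := (Rfun_facts d s).1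
    omega

lemma R_bound : ∀ s, 1 ≤ s → ∃ C, ∀ d, 2 ≤ d → BdAll 0 s (KR s d) C d := by
  refine master (K' := KR) ?_ ?_ ?_ ?_ ?_ ?_ (Or.inr ⟨rfl, rfl⟩)
  · intro d
    simp [KR]
  · intro d
    simp [KR, Rfun]
  · intro s hs
    obtain ⟨s, rfl⟩ : ∃ n, s = n + 1 := ⟨s - 1, by omega⟩
    rw [KR_ge, KR_ge, Rfun_two, Rfun_two, pow_succ]
    omega
  · intro s e hs he
    have := Rfun_rec s e hs he
    rw [KR_ge, KR_ge, this]
    simp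
  · intro s e hs he
    rw [KR_ge, KR_ge, Rfun_rec s e hs he]
    have h1 := KR_facts s (e + 1) hs (by omega)
    have h2 := KR_facts s e hs he
    rw [KR_ge] at h2
    rcases Nat.lt_or_ge s 2 with h | h
    · have : s = 1 := by omega
      subst this
      simp [Rfun, KR]
    · obtain ⟨n, rfl⟩ : ∃ n, s = n + 2 := ⟨s - 2, by omega⟩
      have h3 := (KR_facts (n + 1) (e + 1) (by omega) (by omega)).1
      have h4 : 1 ≤ KR (n + 2) (e + 1) - 1 := by
        have : 2 ≤ KR (n + 2) (e + 1) := h3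
        omega
      have h5 := Nat.mul_le_mul_left (Rfun (n + 2 + 2) e - 3) h4
      have h6 := h1.1
      have h7 := (KR_facts (n + 1) (e + 1) (by omega) (by omega)).2.1
      have h8 : 3 ≤ KR (n + 2 + 1) (e + 1) := h7
      omega
  · intro s e hs he
    exact ⟨(KR_facts s e hs he).2.1, le_rfl⟩

lemma D_bound : ∀ s, 1 ≤ s → ∃ C, ∀ d, 2 ≤ d → BdAll 1 s (Dfun s d) C d := by
  have hRD : ∀ s e, 2 ≤ e → Rfun (s + 2) e ≤ Dfun (s + 2) e := by
    intro s e he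
    obtain ⟨d, rfl⟩ : ∃ d, e = d + 2 := ⟨e - 2, by omega⟩
    exact R_le_D d s
  refine master (K' := KR) ?_ ?_ ?_ ?_ ?_ ?_ (Or.inl R_bound)
  · intro d
    omega
  · intro d
    simp [Dfun]
  · intro s hs
    rw [Dfun_two s hs]
    omega
  · intro s e hs he
    rw [KR_ge, Dfun_rec s e hs he (hRD s e he)]
    have : Dfun s (e + 1) + 2 * 1 - 1 = Dfun s (e + 1) + 1 := by omega
    rw [this]
    omega
  · intro s e hs he
    rw [Dfun_rec s e hs he (hRD s e he)]
    have h1 := hRD s e he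
    obtain ⟨n, rfl⟩ : ∃ n, s = n + 1 := ⟨s - 1, by omega⟩
    have h2 := hRD n (e + 1) (by omega)
    have h3 := (KR_facts (n + 1) (e + 1) (by omega) (by omega)).1
    rw [KR_ge] at h3
    have h4 : 2 ≤ Dfun (n + 1 + 1) (e + 1) := h3.trans h2
    have h5 := Nat.mul_le_mul_left (Rfun (n + 1 + 2) e - 3)
      (show 1 ≤ Dfun (n + 1) (e + 1) + 1 by omega)
    omega
  · intro s e hs he
    exact ⟨(KR_facts s e hs he).2.1, by rw [KR_ge]; exact hRD s e he⟩

lemma form_to_doubled {r s m n : ℕ} (hs : 2 ≤ s) (M : Fin m → Fin n → Bool)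
    (h : FormF 1 s r (Finset.univ : Finset (Fin n))
      (fun j => ((Finset.univ : Finset (Fin m)).filter (fun i => M i j = true)).map
        Fin.valEmbedding)) : DoubledFormation r s M := by
  classical
  obtain ⟨T, -, hr, γ, hγ, hγs, h⟩ := h
  obtain ⟨T', hT', hcard⟩ := Finset.exists_subset_card_eq hr
  refine ⟨fun x => ⟨γ x.val, hγs _⟩, fun a b hab => hγ (Fin.le_def.mp hab),
    T'.orderEmbOfFin hcard, (T'.orderEmbOfFin hcard).strictMono, ?_⟩
  intro j i
  have hj : T'.orderEmbOfFin hcard j ∈ T := hT' (Finset.orderEmbOfFin_mem _ _ _)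
  generalize T'.orderEmbOfFin hcard j = c at hj
  have h1 := h c hj i.val i.isLt
  have h2 : ((((Finset.univ : Finset (Fin m)).filter (fun i => M i c = true)).map
      Fin.valEmbedding).filter (fun e => γ e = i.val)).card =
      Nat.card {x : Fin m // (⟨γ x.val, hγs _⟩ : Fin s) = i ∧ M x c = true} := by
    rw [Nat.card_eq_fintype_card, Fintype.card_subtype, Finset.filter_map, Finset.card_map,
      Finset.filter_filter]
    congr 1
    ext x
    simp [Fin.ext_iff, and_comm]
  rw [h2] at h1
  simp only [needF] at h1
  constructor
  · refine le_trans ?_ h1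
    split_ifs <;> omega
  · intro h0 hl
    refine le_trans ?_ h1
    rw [if_neg h0, if_neg (by omega)]

/-- For every `s ≥ 2` there is a constant `c_s` such that for all
`d ≥ 2`, `r ≥ 2`, `m ≥ k ≥ D_s(d)`, every (0,1)-matrix with `m` rows, at least `k`
`1`-entries in every column and no doubled `(r,s)`-formation has at most
`c_s·r·m·α_d(m)^(s−2)` columns. -/
theorem doubled_formation_free_bound :
    ∀ s : ℕ, 2 ≤ s → ∃ c : ℝ,
      ∀ d r m k : ℕ, 2 ≤ d → 2 ≤ r → k ≤ m → Dfun s d ≤ k →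
        ∀ (n : ℕ) (M : Fin m → Fin n → Bool),
          (∀ j : Fin n, k ≤ colOnes M j) → ¬ DoubledFormation r s M →
            (n : ℝ) ≤ c * (r : ℝ) * (m : ℝ) * (alphaHier d m : ℝ) ^ (s - 2) := by
  intro s hs
  obtain ⟨C, hC⟩ := D_bound s (by omega)
  refine ⟨C, ?_⟩
  intro d r m k hd hr hkm hk n M hcol hfree
  have hD : 1 ≤ Dfun s d := by
    obtain ⟨e, rfl⟩ : ∃ e, d = e + 2 := ⟨d - 2, by omega⟩
    obtain ⟨q, rfl⟩ : ∃ q, s = q + 2 := ⟨s - 2, by omega⟩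
    have h1 := R_le_D e q
    have h2 := (Rfun_facts e q).1
    omega
  have hb := hC d hd r m (by omega) (Fin n) Finset.univ
    (fun j => ((Finset.univ : Finset (Fin m)).filter (fun i => M i j = true)).map
        Fin.valEmbedding) 0 ?_ ?_ (fun h => hfree (form_to_doubled hs M h))
  · rw [Finset.card_univ, Fintype.card_fin] at hb
    have hb' : (n : ℝ) ≤ ((r * (C * alphaHier d m ^ (s - 2)) * m : ℕ) : ℝ) := by
      exact_mod_cast hb
    refine hb'.trans (le_of_eq ?_)
    push_cast
    ring
  · intro j _ e he
    rw [Finset.mem_map] at he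
    obtain ⟨x, _, rfl⟩ := he
    simp
  · intro j _
    have h1 := hcol j
    unfold colOnes at h1
    rw [Nat.card_eq_fintype_card, Fintype.card_subtype] at h1
    rw [Finset.card_map]
    exact hk.trans h1
end
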